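/- arXiv:2406.13696 — 3 statements merged into one kernel-verified Lean document; each statement's English description precedes it below -/
import Mathlib

section
/- For every s₀ ∈ (0,1) there exists a constant C = C(s₀) > 0 such that for every s ∈ [s₀,1), every interval (a,b) ⊂ ℝ, and every measurable function u : (a,b) → ℝ² with finite Gagliardo seminorm of order (1+s)/2, the essential oscillation of u on (a,b) satisfies osc(u,(a,b))² ≤ C (b-a)^s (1-s) [u]²_{H^{(1+s)/2}((a,b))}. -/
open MeasureTheory Set
open scoped ENNReal

noncomputable def GagT (u : ℝ → EuclideanSpace ℝ (Fin 2)) (a b : ℝ) (K : ℝ → ℝ) : ℝ≥0∞ :=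
  ∫⁻ x in Icc a b, ∫⁻ y in Icc a b, ENNReal.ofReal (‖u x - u y‖ ^ 2 * K |x - y|)

lemma gag_meas {u : ℝ → EuclideanSpace ℝ (Fin 2)} (hu : Measurable u) {K : ℝ → ℝ}
    (hK : Measurable K) :
    Measurable (fun p : ℝ × ℝ => ENNReal.ofReal (‖u p.1 - u p.2‖ ^ 2 * K |p.1 - p.2|)) := by
  have h1 : Measurable (fun p : ℝ × ℝ => |p.1 - p.2|) := by fun_prop
  have h2 : Measurable (fun p : ℝ × ℝ => K |p.1 - p.2|) := hK.comp h1
  fun_prop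

lemma lint_mid (x a b : ℝ) (hx : x ∈ Icc a b) (F : ℝ → ℝ≥0∞) (hF : Measurable F) :
    ∫⁻ y in Icc a b, F ((x + y) / 2) ≤ 2 * ∫⁻ m in Icc a b, F m := by
  have key : ∀ G : ℝ → ℝ≥0∞, Measurable G → ∫⁻ y, G ((x + y) / 2) = 2 * ∫⁻ m, G m := by
    intro G hG
    have h1 : ∫⁻ y, G ((x + y) / 2) = ∫⁻ y, G (y / 2) :=
      lintegral_add_left_eq_self (fun y => G (y / 2)) x
    rw [h1]
    have h2 := Real.smul_map_volume_mul_left (a := (2:ℝ)⁻¹) (by norm_num)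
    have h3 : ∫⁻ m, G m = ENNReal.ofReal |(2:ℝ)⁻¹| * ∫⁻ y, G (y / 2) := by
      conv_lhs => rw [← h2]
      rw [lintegral_smul_measure, lintegral_map hG (by fun_prop)]
      simp only [smul_eq_mul]
      congr 2
      ext y
      congr 1
      ring
    rw [h3, ← mul_assoc]
    have : (2:ℝ≥0∞) * ENNReal.ofReal |(2:ℝ)⁻¹| = 1 := by
      rw [abs_of_pos (by norm_num), ENNReal.ofReal_inv_of_pos (by norm_num)]
      simp [ENNReal.mul_inv_cancel]
    rw [this, one_mul]
  rw [← lintegral_indicator measurableSet_Icc, ← lintegral_indicator measurableSet_Icc,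
    ← key _ (hF.indicator measurableSet_Icc)]
  apply lintegral_mono
  intro y
  by_cases hy : y ∈ Icc a b
  · have : (x + y) / 2 ∈ Icc a b := ⟨by linarith [hx.1, hy.1], by linarith [hx.2, hy.2]⟩
    simp [hy, this]
  · simp [hy]

lemma lint_sym (a b : ℝ) (F : ℝ → ℝ → ℝ≥0∞) (hF : Measurable (fun p : ℝ × ℝ => F p.1 p.2)) :
    ∫⁻ x in Icc a b, ∫⁻ y in Icc a b, (2 * F x ((x + y) / 2) + 2 * F y ((y + x) / 2)) ≤
      8 * ∫⁻ x in Icc a b, ∫⁻ y in Icc a b, F x y := by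
  have hFx : ∀ x, Measurable (F x) := fun x => hF.comp (by fun_prop : Measurable fun m : ℝ => (x, m))
  have hm1 : Measurable (fun p : ℝ × ℝ => F p.1 ((p.1 + p.2) / 2)) :=
    hF.comp (by fun_prop : Measurable fun p : ℝ × ℝ => (p.1, (p.1 + p.2) / 2))
  have hm2 : Measurable (fun p : ℝ × ℝ => F p.2 ((p.2 + p.1) / 2)) :=
    hF.comp (by fun_prop : Measurable fun p : ℝ × ℝ => (p.2, (p.2 + p.1) / 2))
  have hA : ∫⁻ x in Icc a b, ∫⁻ y in Icc a b, F x ((x + y) / 2)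
      ≤ 2 * ∫⁻ x in Icc a b, ∫⁻ y in Icc a b, F x y := by
    rw [← lintegral_const_mul _ (Measurable.lintegral_prod_right' hF)]
    apply setLIntegral_mono' measurableSet_Icc
    intro x hx
    exact lint_mid x a b hx (F x) (hFx x)
  have hB : ∫⁻ x in Icc a b, ∫⁻ y in Icc a b, F y ((y + x) / 2)
      = ∫⁻ x in Icc a b, ∫⁻ y in Icc a b, F x ((x + y) / 2) :=
    lintegral_lintegral_swap hm2.aemeasurable
  have hC : ∫⁻ x in Icc a b, ∫⁻ y in Icc a b, (2 * F x ((x + y) / 2) + 2 * F y ((y + x) / 2))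
      = 2 * (∫⁻ x in Icc a b, ∫⁻ y in Icc a b, F x ((x + y) / 2)) +
        2 * ∫⁻ x in Icc a b, ∫⁻ y in Icc a b, F y ((y + x) / 2) := by
    rw [← lintegral_const_mul _ hm1.lintegral_prod_right',
      ← lintegral_const_mul _ hm2.lintegral_prod_right',
      ← lintegral_add_left (hm1.lintegral_prod_right'.const_mul 2)]
    congr 1
    ext x
    have g1 : Measurable fun y => F x ((x + y) / 2) :=
      hm1.comp (by fun_prop : Measurable fun y : ℝ => (x, y))
    have g2 : Measurable fun y => F y ((y + x) / 2) :=
      hm2.comp (by fun_prop : Measurable fun y : ℝ => (x, y))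
    rw [lintegral_add_left (g1.const_mul 2), lintegral_const_mul _ g1,
      lintegral_const_mul _ g2]
  rw [hC, hB]
  generalize ∫⁻ x in Icc a b, ∫⁻ y in Icc a b, F x ((x + y) / 2) = A at hA
  generalize ∫⁻ x in Icc a b, ∫⁻ y in Icc a b, F x y = G at hA ⊢
  calc 2 * A + 2 * A ≤ 2 * (2 * G) + 2 * (2 * G) := by gcongr
    _ = 8 * G := by ring

lemma gag_double_pt (u : ℝ → EuclideanSpace ℝ (Fin 2)) {K : ℝ → ℝ}
    (hK0 : ∀ t, 0 ≤ K t) (x y : ℝ) : ENNReal.ofReal (‖u x - u y‖ ^ 2 * K |x - y|)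
      ≤ 2 * ENNReal.ofReal (‖u x - u ((x + y) / 2)‖ ^ 2 * K (2 * |x - (x + y) / 2|))
      + 2 * ENNReal.ofReal (‖u y - u ((y + x) / 2)‖ ^ 2 * K (2 * |y - (y + x) / 2|)) := by
  have e1 : 2 * |x - (x + y) / 2| = |x - y| := by
    rw [show x - (x + y) / 2 = (x - y) / 2 by ring, abs_div, abs_two]; ring
  have e2 : 2 * |y - (x + y) / 2| = |x - y| := by
    rw [show y - (x + y) / 2 = -((x - y) / 2) by ring, abs_neg, abs_div, abs_two]; ring
  rw [add_comm y x, e1, e2]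
  generalize (x + y) / 2 = m
  have hk := hK0 |x - y|
  generalize K |x - y| = k at *
  have h2e : ∀ z : ℝ, (2:ℝ≥0∞) * ENNReal.ofReal z = ENNReal.ofReal (2 * z) := by
    intro z; rw [ENNReal.ofReal_mul (by norm_num)]; simp
  rw [h2e, h2e, ← ENNReal.ofReal_add (by positivity) (by positivity)]
  apply ENNReal.ofReal_le_ofReal
  have h1 : ‖u x - u y‖ ≤ ‖u x - u m‖ + ‖u y - u m‖ := by
    have := norm_sub_le (u x - u m) (u y - u m)
    simpa using this
  have h2 : ‖u x - u y‖ ^ 2 ≤ 2 * ‖u x - u m‖ ^ 2 + 2 * ‖u y - u m‖ ^ 2 := by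
    have := pow_le_pow_left₀ (norm_nonneg _) h1 2
    nlinarith [sq_nonneg (‖u x - u m‖ - ‖u y - u m‖)]
  nlinarith [mul_le_mul_of_nonneg_right h2 hk]

lemma gag_double {u : ℝ → EuclideanSpace ℝ (Fin 2)} (hu : Measurable u) {K : ℝ → ℝ}
    (hK : Measurable K) (hK0 : ∀ t, 0 ≤ K t) (a b : ℝ) :
    GagT u a b K ≤ 8 * GagT u a b (fun t => K (2 * t)) := by
  have hK2 : Measurable (fun t => K (2 * t)) := hK.comp (by fun_prop)
  refine le_trans ?_ (lint_sym a b
    (fun x m => ENNReal.ofReal (‖u x - u m‖ ^ 2 * K (2 * |x - m|))) (gag_meas hu hK2))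
  exact lintegral_mono fun x => lintegral_mono fun y => gag_double_pt u hK0 x y

lemma gag_phi {u : ℝ → EuclideanSpace ℝ (Fin 2)} (hu : Measurable u) (a b s r : ℝ)
    (hs0 : 0 < s) (hs1 : s < 1) (hr : 0 < r)
    (hfin : GagT u a b (fun t => (t ^ (2 + s))⁻¹) ≠ ⊤) :
    GagT u a b (fun t => if t ≤ r then 1 else 0) ≤
      ENNReal.ofReal (4 / 3 * r ^ (2 + s) * (1 - s) *
        (GagT u a b (fun t => (t ^ (2 + s))⁻¹)).toReal) := by
  set p := 2 + s with hp
  set J : ℝ → ℝ := fun t => (t ^ p)⁻¹ with hJ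
  set K : ℝ → ℝ := fun t => max ((t ^ p)⁻¹ - ((2 * r) ^ p)⁻¹) 0 with hKd
  set χ : ℝ → ℝ := fun t => if t ≤ r then 1 else 0 with hχ
  set c : ℝ := 3 / 4 * (r ^ p)⁻¹ with hc
  have hrp : 0 < r ^ p := Real.rpow_pos_of_pos hr _
  have hcpos : 0 < c := by positivity
  have h2p : (4:ℝ) ≤ 2 ^ p := by
    calc (4:ℝ) = 2 ^ (2:ℝ) := by norm_num
      _ ≤ 2 ^ p := Real.rpow_le_rpow_of_exponent_le (by norm_num) (by linarith)
  have hKm : Measurable K := by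
    have : Measurable (fun t : ℝ => t ^ p) := measurable_id.pow_const p
    fun_prop
  have hχm : Measurable χ := Measurable.ite measurableSet_Iic measurable_const measurable_const
  have hK2m : Measurable (fun t => K (2 * t)) := hKm.comp (by fun_prop)
  have hK0 : ∀ t, 0 ≤ K t := fun t => le_max_right _ _
  have hKJ : ∀ t, 0 ≤ t → K t ≤ J t := by
    intro t ht
    have h1 : 0 ≤ (t ^ p)⁻¹ := inv_nonneg.2 (Real.rpow_nonneg ht _)
    have h2 : 0 ≤ ((2 * r) ^ p)⁻¹ := by positivity
    exact max_le (by simp only [hJ]; linarith) h1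
  have hW : ∀ t, 0 < t → 2 ^ p * K (2 * t) + c * χ t ≤ K t := by
    intro t ht
    have htp : 0 < t ^ p := Real.rpow_pos_of_pos ht _
    have e1 : (2 * t) ^ p = 2 ^ p * t ^ p := Real.mul_rpow (by norm_num) ht.le
    have e2 : (2 * r) ^ p = 2 ^ p * r ^ p := Real.mul_rpow (by norm_num) hr.le
    by_cases htr : t ≤ r
    · have h1 : t ^ p ≤ r ^ p := Real.rpow_le_rpow ht.le htr (by linarith)
      have h2 : (r ^ p)⁻¹ ≤ (t ^ p)⁻¹ := inv_anti₀ htp h1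
      have h3 : K (2 * t) = (2 ^ p)⁻¹ * ((t ^ p)⁻¹ - (r ^ p)⁻¹) := by
        simp only [hKd, e1, e2, mul_inv]
        rw [max_eq_left]
        · ring
        · have : 0 ≤ ((2:ℝ) ^ p)⁻¹ := by positivity
          nlinarith
      have h4 : (t ^ p)⁻¹ - ((2 * r) ^ p)⁻¹ ≤ K t := le_max_left _ _
      have h5 : ((2:ℝ) ^ p)⁻¹ ≤ 1 / 4 := by
        rw [one_div]; exact inv_anti₀ (by norm_num) h2p
      have h6 : 0 < (r ^ p)⁻¹ := by positivity
      rw [h3, mul_inv_cancel_left₀ (by positivity)]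
      refine le_trans ?_ h4
      rw [e2, mul_inv]
      simp only [hχ, htr, if_true, hc]
      nlinarith
    · push Not at htr
      have h1 : r ^ p ≤ t ^ p := Real.rpow_le_rpow hr.le htr.le (by linarith)
      have h3 : K (2 * t) = 0 := by
        simp only [hKd, e1, e2]
        apply max_eq_right
        rw [sub_nonpos]
        apply inv_anti₀ (by positivity)
        gcongr
      rw [h3]
      simp [hχ, not_le.2 htr, hK0]
  have hTK : GagT u a b K ≤ GagT u a b J := by
    apply lintegral_mono; intro x; apply lintegral_mono; intro y
    apply ENNReal.ofReal_le_ofReal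
    exact mul_le_mul_of_nonneg_left (hKJ _ (abs_nonneg _)) (by positivity)
  have hTW : ENNReal.ofReal (2 ^ p) * GagT u a b (fun t => K (2 * t)) +
      ENNReal.ofReal c * GagT u a b χ ≤ GagT u a b K := by
    have m1 := gag_meas hu hK2m
    have m2 := gag_meas hu hχm
    unfold GagT
    rw [← lintegral_const_mul _ m1.lintegral_prod_right',
      ← lintegral_const_mul _ m2.lintegral_prod_right',
      ← lintegral_add_left (m1.lintegral_prod_right'.const_mul _)]
    apply lintegral_mono
    intro x
    have g1 := m1.comp (by fun_prop : Measurable fun y : ℝ => (x, y))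
    have g2 := m2.comp (by fun_prop : Measurable fun y : ℝ => (x, y))
    simp only [Function.comp_def] at g1 g2
    simp only
    rw [← lintegral_const_mul _ g1, ← lintegral_const_mul _ g2,
      ← lintegral_add_left (g1.const_mul _)]
    apply lintegral_mono
    intro y
    simp only
    have hχ0 : 0 ≤ χ |x - y| := by simp only [hχ]; split_ifs <;> norm_num
    have hk0 := hK0 (2 * |x - y|)
    rw [← ENNReal.ofReal_mul (by positivity), ← ENNReal.ofReal_mul hcpos.le,
      ← ENNReal.ofReal_add (by positivity) (by positivity)]
    apply ENNReal.ofReal_le_ofReal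
    by_cases hxy : x = y
    · subst hxy; simp
    · have := hW |x - y| (abs_pos.2 (sub_ne_zero.2 hxy))
      nlinarith [mul_le_mul_of_nonneg_left this (sq_nonneg ‖u x - u y‖)]
  have hD := gag_double hu hKm hK0 a b
  have fK : GagT u a b K ≠ ⊤ := ne_top_of_le_ne_top hfin hTK
  have fW := ne_top_of_le_ne_top fK hTW
  have f1 := (ENNReal.add_ne_top.1 fW).1
  have f2 := (ENNReal.add_ne_top.1 fW).2
  have f3 : GagT u a b (fun t => K (2 * t)) ≠ ⊤ := by
    intro h; rw [h] at f1
    exact f1 (ENNReal.mul_top (by simp; positivity))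
  have f4 : GagT u a b χ ≠ ⊤ := by
    intro h; rw [h] at f2
    exact f2 (ENNReal.mul_top (by simpa using hcpos))
  have r1 := ENNReal.toReal_mono fK hTW
  rw [ENNReal.toReal_add f1 f2, ENNReal.toReal_mul, ENNReal.toReal_mul,
    ENNReal.toReal_ofReal (by positivity), ENNReal.toReal_ofReal hcpos.le] at r1
  have r2 := ENNReal.toReal_mono (ENNReal.mul_ne_top (by norm_num) f3) hD
  rw [ENNReal.toReal_mul] at r2
  have r3 := ENNReal.toReal_mono hfin hTK
  norm_num at r2
  rw [← ENNReal.ofReal_toReal f4]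
  apply ENNReal.ofReal_le_ofReal
  generalize (GagT u a b χ).toReal = φ at *
  have hk : 0 ≤ (GagT u a b K).toReal := ENNReal.toReal_nonneg
  generalize (GagT u a b K).toReal = k at *
  generalize (GagT u a b J).toReal = S at *
  generalize (GagT u a b (fun t => K (2 * t))).toReal = h at *
  have h8 : 8 * s ≤ 2 ^ p := by
    have e : (2:ℝ) ^ p = 8 * Real.exp (Real.log 2 * (s - 1)) := by
      rw [← Real.rpow_def_of_pos (by norm_num), show p = (s - 1) + 3 by rw [hp]; ring,
        Real.rpow_add (by norm_num)]
      norm_num; ring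
    have := Real.add_one_le_exp (Real.log 2 * (s - 1))
    have hl : Real.log 2 ≤ 1 := by linarith [Real.log_two_lt_d9]
    rw [e]; nlinarith
  have h9 : c * φ ≤ (1 - s) * S := by
    have : s * k ≤ 2 ^ p * h := by
      have h1 : k / 8 ≤ h := by linarith
      have : 2 ^ p * (k / 8) ≤ 2 ^ p * h := mul_le_mul_of_nonneg_left h1 (by positivity)
      nlinarith
    nlinarith
  have : φ = 4 / 3 * r ^ p * (c * φ) := by
    rw [hc]; field_simp
  rw [this, mul_assoc _ (1 - s) S]
  exact mul_le_mul_of_nonneg_left h9 (by positivity)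

lemma avg_one (μ : Measure ℝ) [IsFiniteMeasure μ] [NeZero μ] {u : ℝ → EuclideanSpace ℝ (Fin 2)}
    (hu : Measurable u) (hi : Integrable u μ) (c : EuclideanSpace ℝ (Fin 2)) :
    ENNReal.ofReal (‖c - ⨍ x, u x ∂μ‖ ^ 2) * μ univ ≤ ∫⁻ x, ENNReal.ofReal (‖c - u x‖ ^ 2) ∂μ := by
  by_cases hT : ∫⁻ x, ENNReal.ofReal (‖c - u x‖ ^ 2) ∂μ = ⊤
  · rw [hT]; exact le_top
  have hint : Integrable (fun x => ‖c - u x‖ ^ 2) μ := by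
    refine ⟨by fun_prop, ?_⟩
    rw [hasFiniteIntegral_iff_ofReal (by filter_upwards with x; positivity)]
    exact lt_top_iff_ne_top.2 hT
  have hconv : ConvexOn ℝ univ (fun v : EuclideanSpace ℝ (Fin 2) => ‖c - v‖ ^ 2) := by
    have h1 : ConvexOn ℝ univ (fun v : EuclideanSpace ℝ (Fin 2) => ‖c - v‖) := by
      have := convexOn_univ_dist c
      simpa [dist_eq_norm, norm_sub_rev] using! this
    exact h1.pow (fun _ _ => norm_nonneg _) 2
  have h := hconv.map_average_le (μ := μ) (f := u) (by fun_prop) isClosed_univ (by simp) hi hint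
  rw [← ofReal_integral_eq_lintegral_ofReal hint (by filter_upwards with x; positivity)]
  rw [average_eq _ (fun x => ‖c - u x‖ ^ 2)] at h
  have hμ : 0 < μ.real univ := by
    rw [Measure.real, ENNReal.toReal_pos_iff]
    exact ⟨by simpa [pos_iff_ne_zero] using NeZero.ne μ, measure_lt_top _ _⟩
  rw [← ENNReal.ofReal_toReal (measure_ne_top μ univ), ← ENNReal.ofReal_mul (by positivity)]
  apply ENNReal.ofReal_le_ofReal
  rw [smul_eq_mul] at h
  change _ * μ.real univ ≤ _
  calc _ ≤ ((μ.real univ)⁻¹ * ∫ x, ‖c - u x‖ ^ 2 ∂μ) * μ.real univ :=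
        mul_le_mul_of_nonneg_right h hμ.le
    _ = _ := by field_simp

lemma avg_two (μ ν : Measure ℝ) [IsFiniteMeasure μ] [NeZero μ] [IsFiniteMeasure ν] [NeZero ν]
    {u : ℝ → EuclideanSpace ℝ (Fin 2)}
    (hu : Measurable u) (hi : Integrable u μ) (hj : Integrable u ν) :
    ENNReal.ofReal (‖⨍ x, u x ∂μ - ⨍ x, u x ∂ν‖ ^ 2) * μ univ * ν univ ≤
      ∫⁻ x, ∫⁻ y, ENNReal.ofReal (‖u x - u y‖ ^ 2) ∂ν ∂μ := by
  have h1 := avg_one μ hu hi (⨍ x, u x ∂ν)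
  have h2 : ∀ x, _ := fun x => avg_one ν hu hj (u x)
  calc _ ≤ (∫⁻ x, ENNReal.ofReal (‖(⨍ y, u y ∂ν) - u x‖ ^ 2) ∂μ) * ν univ := by
        rw [norm_sub_rev]; gcongr
    _ = ∫⁻ x, ENNReal.ofReal (‖u x - (⨍ y, u y ∂ν)‖ ^ 2) * ν univ ∂μ := by
        rw [lintegral_mul_const _ (by fun_prop)]
        simp only [norm_sub_rev]
    _ ≤ _ := lintegral_mono h2

lemma gag_int {u : ℝ → EuclideanSpace ℝ (Fin 2)} (hu : Measurable u) (a b : ℝ) (hab : a < b)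
    (hfin : GagT u a b (fun t => if t ≤ b - a then 1 else 0) ≠ ⊤) :
    IntegrableOn u (Icc a b) := by
  have hχm : Measurable (fun t : ℝ => if t ≤ b - a then (1:ℝ) else 0) :=
    Measurable.ite measurableSet_Iic measurable_const measurable_const
  have h1 := ae_lt_top (gag_meas hu hχm).lintegral_prod_right' hfin
  have h2 : ∀ᵐ x ∂(volume.restrict (Icc a b)), x ∈ Icc a b := ae_restrict_mem measurableSet_Icc
  have hne : NeZero (volume.restrict (Icc a b)) := ⟨by
    rw [Ne, Measure.restrict_eq_zero, Real.volume_Icc]; simpa using hab⟩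
  obtain ⟨x, hx, hxm⟩ := (h1.and h2).exists
  have hint : IntegrableOn (fun y => ‖u x - u y‖ ^ 2) (Icc a b) := by
    refine ⟨by fun_prop, ?_⟩
    rw [hasFiniteIntegral_iff_ofReal (by filter_upwards with x; positivity)]
    refine lt_of_eq_of_lt ?_ hx
    apply setLIntegral_congr_fun measurableSet_Icc
    intro y hy
    have : |x - y| ≤ b - a := by
      rw [abs_le]; constructor <;> linarith [hxm.1, hxm.2, hy.1, hy.2]
    simp [this]
  have hc : IntegrableOn (fun _ : ℝ => ‖u x‖ + 1) (Icc a b) := by simp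
  refine Integrable.mono' (hc.add hint) (by fun_prop) ?_
  filter_upwards with y
  have := norm_sub_norm_le (u y) (u x)
  rw [norm_sub_rev] at this
  simp only [Pi.add_apply]
  nlinarith [sq_nonneg (‖u x - u y‖ - 1), norm_nonneg (u x - u y)]

lemma gag_step {u : ℝ → EuclideanSpace ℝ (Fin 2)} (hu : Measurable u) (a b s : ℝ)
    (hs0 : 0 < s) (hs1 : s < 1)
    (hfin : GagT u a b (fun t => (t ^ (2 + s))⁻¹) ≠ ⊤) (hi : IntegrableOn u (Icc a b))
    (c c' d : ℝ) (hd : 0 < d)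
    (h1 : Icc (c - d) (c + d) ⊆ Icc a b)
    (h2 : Icc (c' - d / 2) (c' + d / 2) ⊆ Icc (c - d) (c + d)) :
    ‖(⨍ y in Icc (c - d) (c + d), u y) - ⨍ y in Icc (c' - d / 2) (c' + d / 2), u y‖ ^ 2 ≤
      8 / 3 * (2 * d) ^ s * (1 - s) * (GagT u a b (fun t => (t ^ (2 + s))⁻¹)).toReal := by
  have n1 : NeZero (volume.restrict (Icc (c - d) (c + d))) := ⟨by
    rw [Ne, Measure.restrict_eq_zero, Real.volume_Icc]; simp; linarith⟩
  have n2 : NeZero (volume.restrict (Icc (c' - d / 2) (c' + d / 2))) := ⟨by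
    rw [Ne, Measure.restrict_eq_zero, Real.volume_Icc]; simp; linarith⟩
  have h := avg_two (volume.restrict (Icc (c - d) (c + d)))
    (volume.restrict (Icc (c' - d / 2) (c' + d / 2))) hu (hi.mono_set h1)
    (hi.mono_set (h2.trans h1))
  have hphi := gag_phi hu a b s (2 * d) hs0 hs1 (by positivity) hfin
  have hle : ∫⁻ x in Icc (c - d) (c + d), ∫⁻ y in Icc (c' - d / 2) (c' + d / 2),
      ENNReal.ofReal (‖u x - u y‖ ^ 2) ≤ GagT u a b (fun t => if t ≤ 2 * d then 1 else 0) := by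
    refine le_trans ?_ (lintegral_mono_set h1)
    apply setLIntegral_mono' measurableSet_Icc
    intro x hx
    refine le_trans ?_ (lintegral_mono_set (h2.trans h1))
    apply setLIntegral_mono' measurableSet_Icc
    intro y hy
    have hy' := h2 hy
    have : |x - y| ≤ 2 * d := by
      rw [abs_le]; constructor <;> linarith [hx.1, hx.2, hy'.1, hy'.2]
    simp [this]
  have h' := h.trans (hle.trans hphi)
  simp only [Measure.restrict_apply_univ, Real.volume_Icc] at h'
  rw [← ENNReal.ofReal_mul (by positivity), ← ENNReal.ofReal_mul
    (mul_nonneg (by positivity) (by linarith)), ENNReal.ofReal_le_ofReal_iff] at h'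
  · rw [Real.rpow_add (by positivity)] at h'
    have e : ((2 * d) ^ (2:ℝ)) = 4 * d ^ 2 := by
      rw [Real.rpow_ofNat]; ring
    rw [e] at h'
    have hd2 : 0 < 2 * d ^ 2 := by positivity
    refine le_of_mul_le_mul_right ?_ hd2
    nlinarith
  · have : 0 ≤ 1 - s := by linarith
    have := ENNReal.toReal_nonneg (a := GagT u a b (fun t => (t ^ (2 + s))⁻¹))
    positivity

lemma gag_pt {u : ℝ → EuclideanSpace ℝ (Fin 2)} (hu : Measurable u) (a b s : ℝ) (hab : a < b)
    (hs0 : 0 < s) (hs1 : s < 1)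
    (hfin : GagT u a b (fun t => (t ^ (2 + s))⁻¹) ≠ ⊤) :
    ∀ᵐ x ∂(volume.restrict (Icc a b)), dist (⨍ y in Icc a b, u y) (u x) ≤
      √(8 / 3 * (b - a) ^ s * (1 - s) * (GagT u a b (fun t => (t ^ (2 + s))⁻¹)).toReal) /
        (1 - (1 / 2 : ℝ) ^ (s / 2)) := by
  have hL : 0 < b - a := sub_pos.2 hab
  have hphi := gag_phi hu a b s (b - a) hs0 hs1 hL hfin
  have hi := gag_int hu a b hab (ne_top_of_le_ne_top ENNReal.ofReal_ne_top hphi)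
  have hli : LocallyIntegrable ((Icc a b).indicator u) volume :=
    (hi.integrable_indicator measurableSet_Icc).locallyIntegrable
  have hleb := IsUnifLocDoublingMeasure.ae_tendsto_average volume hli 1
  filter_upwards [ae_restrict_mem measurableSet_Icc, ae_restrict_of_ae hleb] with x hx hxl
  set S := (GagT u a b (fun t => (t ^ (2 + s))⁻¹)).toReal with hS
  have hS0 : 0 ≤ S := ENNReal.toReal_nonneg
  have h1s : 0 ≤ 1 - s := by linarith
  set w : ℕ → ℝ := fun k => x + (1 / 2) ^ k * ((a + b) / 2 - x) with hw
  set δ : ℕ → ℝ := fun k => (1 / 2) ^ k * ((b - a) / 2) with hδ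
  have hδ0 : ∀ k, 0 < δ k := fun k => by simp only [hδ]; positivity
  have hδs : ∀ k, δ (k + 1) = δ k / 2 := fun k => by simp only [hδ, pow_succ]; ring
  have hδlim : Filter.Tendsto δ Filter.atTop (nhdsWithin 0 (Ioi 0)) := by
    rw [tendsto_nhdsWithin_iff]
    refine ⟨?_, Filter.Eventually.of_forall hδ0⟩
    have := (tendsto_pow_atTop_nhds_zero_of_lt_one (r := (1 / 2 : ℝ)) (by norm_num)
      (by norm_num)).mul_const ((b - a) / 2)
    simpa [hδ] using this
  have hmem : ∀ k, x ∈ Icc (w k - δ k) (w k + δ k) := by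
    intro k
    have hp : (0:ℝ) < (1 / 2) ^ k := by positivity
    simp only [hw, hδ]
    constructor
    · nlinarith [mul_nonneg hp.le (sub_nonneg.2 hx.1)]
    · nlinarith [mul_nonneg hp.le (sub_nonneg.2 hx.2)]
  have hnest : ∀ k, Icc (w (k + 1) - δ (k + 1)) (w (k + 1) + δ (k + 1)) ⊆
      Icc (w k - δ k) (w k + δ k) := by
    intro k
    have h := hmem k
    have e : w (k + 1) = (x + w k) / 2 := by simp only [hw, pow_succ]; ring
    rw [e, hδs]
    apply Icc_subset_Icc
    · linarith [h.1]
    · linarith [h.2]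
  have h0 : Icc (w 0 - δ 0) (w 0 + δ 0) = Icc a b := by
    simp only [hw, hδ]; congr 1 <;> ring
  have hsub : ∀ k, Icc (w k - δ k) (w k + δ k) ⊆ Icc a b := by
    intro k
    induction k with
    | zero => exact h0.subset
    | succ k ih => exact (hnest k).trans ih
  have hlim := hxl w δ hδlim (Filter.Eventually.of_forall fun k => by
    rw [one_mul, Real.closedBall_eq_Icc]; exact hmem k)
  rw [indicator_of_mem hx] at hlim
  have heq : (fun j => ⨍ y in Metric.closedBall (w j) (δ j), (Icc a b).indicator u y) =
      fun k => ⨍ y in Icc (w k - δ k) (w k + δ k), u y := by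
    ext1 k
    rw [Real.closedBall_eq_Icc, setAverage_eq, setAverage_eq]
    congr 1
    apply setIntegral_congr_fun measurableSet_Icc
    intro y hy
    exact indicator_of_mem (hsub k hy) u
  rw [heq] at hlim
  have hq1 : (1 / 2 : ℝ) ^ (s / 2) < 1 :=
    Real.rpow_lt_one (by norm_num) (by norm_num) (by linarith)
  have hq0 : 0 < (1 / 2 : ℝ) ^ (s / 2) := by positivity
  rw [← h0]
  refine dist_le_of_le_geometric_of_tendsto₀ _ _ hq1 ?_ hlim
  intro k
  have hst := gag_step hu a b s hs0 hs1 hfin hi (w k) (w (k + 1)) (δ k) (hδ0 k) (hsub k)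
    (by rw [← hδs]; exact hnest k)
  rw [← hδs] at hst
  rw [dist_eq_norm]
  apply le_of_sq_le_sq _ (by positivity)
  refine hst.trans (le_of_eq ?_)
  rw [mul_pow, Real.sq_sqrt (by positivity)]
  have e : (2 * δ k) ^ s = (b - a) ^ s * (((1 / 2 : ℝ) ^ (s / 2)) ^ k) ^ 2 := by
    have : 2 * δ k = (b - a) * (1 / 2) ^ k := by simp only [hδ]; ring
    rw [this, Real.mul_rpow hL.le (by positivity)]
    congr 1
    rw [← Real.rpow_natCast, ← Real.rpow_natCast, ← Real.rpow_natCast, ← Real.rpow_mul (by norm_num),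
      ← Real.rpow_mul (by positivity), ← Real.rpow_mul (by positivity)]
    congr 1
    push_cast; ring
  rw [e]; ring

/-- Fractional Sobolev embedding in dimension one: for every s₀ ∈ (0,1) there is a
constant C = C(s₀) > 0 such that for every s ∈ [s₀,1), every interval (a,b) and every
measurable u : (a,b) → ℝ² with finite Gagliardo H^{(1+s)/2}-seminorm,
osc(u,(a,b))² ≤ C (b-a)^s (1-s) [u]²_{H^{(1+s)/2}((a,b))}. -/
theorem stmt_0 :
    ∀ s₀ ∈ Ioo (0 : ℝ) 1, ∃ C > (0 : ℝ), ∀ s ∈ Ico s₀ 1, ∀ a b : ℝ, a < b →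
      ∀ u : ℝ → EuclideanSpace ℝ (Fin 2), Measurable u →
      (∫⁻ x in Ioo a b, ∫⁻ y in Ioo a b,
          ENNReal.ofReal (‖u x - u y‖ ^ 2 / |x - y| ^ (2 + s))) < ⊤ →
      (essSup (fun p : ℝ × ℝ => ‖u p.1 - u p.2‖)
          ((volume.restrict (Ioo a b)).prod (volume.restrict (Ioo a b)))) ^ 2
        ≤ C * (b - a) ^ s * (1 - s) *
          (∫⁻ x in Ioo a b, ∫⁻ y in Ioo a b,
            ENNReal.ofReal (‖u x - u y‖ ^ 2 / |x - y| ^ (2 + s))).toReal := by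
  intro s₀ hs₀
  have hq0 : (1 / 2 : ℝ) ^ (s₀ / 2) < 1 :=
    Real.rpow_lt_one (by norm_num) (by norm_num) (by linarith [hs₀.1])
  have hQ : 0 < 1 - (1 / 2 : ℝ) ^ (s₀ / 2) := by linarith
  refine ⟨32 / 3 / (1 - (1 / 2 : ℝ) ^ (s₀ / 2)) ^ 2, by positivity, ?_⟩
  intro s hs a b hab u hu hfin
  have hs0 : 0 < s := hs₀.1.trans_le hs.1
  have hL : 0 < b - a := sub_pos.2 hab
  have h1s : 0 < 1 - s := by linarith [hs.2]
  have hr : (volume : Measure ℝ).restrict (Ioo a b) = volume.restrict (Icc a b) :=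
    Measure.restrict_congr_set Ioo_ae_eq_Icc
  have hE : (∫⁻ x in Ioo a b, ∫⁻ y in Ioo a b,
      ENNReal.ofReal (‖u x - u y‖ ^ 2 / |x - y| ^ (2 + s))) =
      GagT u a b (fun t => (t ^ (2 + s))⁻¹) := by
    rw [hr]; rfl
  rw [hE] at hfin ⊢
  rw [hr]
  have hpt := gag_pt hu a b s hab hs0 hs.2 hfin.ne
  have hS0 : 0 ≤ (GagT u a b (fun t => (t ^ (2 + s))⁻¹)).toReal := ENNReal.toReal_nonneg
  set S := (GagT u a b (fun t => (t ^ (2 + s))⁻¹)).toReal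
  set μ : Measure ℝ := volume.restrict (Icc a b) with hμ
  set m := ⨍ y in Icc a b, u y
  set B := √(8 / 3 * (b - a) ^ s * (1 - s) * S) / (1 - (1 / 2 : ℝ) ^ (s / 2)) with hB
  have hne : NeZero μ := ⟨by
    rw [hμ, Ne, Measure.restrict_eq_zero, Real.volume_Icc]; simpa using hab⟩
  have hpair : ∀ᵐ p ∂(μ.prod μ), ‖u p.1 - u p.2‖ ≤ 2 * B := by
    have hms : MeasurableSet {p : ℝ × ℝ | ‖u p.1 - u p.2‖ ≤ 2 * B} :=
      measurableSet_le (by fun_prop) measurable_const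
    rw [Measure.ae_prod_iff_ae_ae hms]
    filter_upwards [hpt] with x hx
    filter_upwards [hpt] with y hy
    rw [← dist_eq_norm]
    have := dist_triangle_left (u x) (u y) m
    linarith
  have hne2 : NeZero (μ.prod μ) := ⟨by
    rw [Ne, ← Measure.measure_univ_eq_zero, ← univ_prod_univ, Measure.prod_prod]
    simpa using hne.ne⟩
  have hlow : ∀ c : ℝ, (∀ᵐ p ∂(μ.prod μ), ‖u p.1 - u p.2‖ ≤ c) → 0 ≤ c := by
    intro c hc
    obtain ⟨p, hp⟩ := hc.exists
    exact (norm_nonneg _).trans hp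
  have hes : essSup (fun p : ℝ × ℝ => ‖u p.1 - u p.2‖) (μ.prod μ) =
      sInf {c : ℝ | ∀ᵐ p ∂(μ.prod μ), ‖u p.1 - u p.2‖ ≤ c} := by
    rw [essSup, Filter.limsup_eq]
  rw [hes]
  have hle : sInf {c : ℝ | ∀ᵐ p ∂(μ.prod μ), ‖u p.1 - u p.2‖ ≤ c} ≤ 2 * B :=
    csInf_le ⟨0, fun c hc => hlow c hc⟩ hpair
  have hge : 0 ≤ sInf {c : ℝ | ∀ᵐ p ∂(μ.prod μ), ‖u p.1 - u p.2‖ ≤ c} :=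
    Real.sInf_nonneg fun c hc => hlow c hc
  refine (pow_le_pow_left₀ hge hle 2).trans ?_
  have hqq : (1 / 2 : ℝ) ^ (s / 2) ≤ (1 / 2 : ℝ) ^ (s₀ / 2) :=
    Real.rpow_le_rpow_of_exponent_ge (by norm_num) (by norm_num) (by linarith [hs.1])
  have hX : 0 ≤ (b - a) ^ s * (1 - s) * S := by positivity
  have hB2 : (2 * B) ^ 2 = 32 / 3 * ((b - a) ^ s * (1 - s) * S) /
      (1 - (1 / 2 : ℝ) ^ (s / 2)) ^ 2 := by
    rw [hB, mul_pow, div_pow, Real.sq_sqrt (by positivity)]; ring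
  rw [hB2]
  calc _ ≤ 32 / 3 * ((b - a) ^ s * (1 - s) * S) / (1 - (1 / 2 : ℝ) ^ (s₀ / 2)) ^ 2 := by
        gcongr
    _ = _ := by ring
end

section
/- Let s₀ ∈ (0,1). There exists a constant c = c(s₀) > 0 with the following property. Let Q ⊂ ℝ² be the boundary of a square with side length 2t, with sides L₁, L₂, L₃, L₄, let s ∈ [s₀,1), and let u : Q → 𝕊¹ be continuous with |deg(u,Q)| = d. Then [u]²_{H^{(1+s)/2}(L₁)} + [u]²_{H^{(1+s)/2}(L₂)} + [u]²_{H^{(1+s)/2}(L₃)} + [u]²_{H^{(1+s)/2}(L₄)} ≥ c · d/(1-s) · t^{-s}. -/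
open MeasureTheory Set Metric
open scoped ENNReal RealInnerProductSpace

noncomputable section

/-- The four sides of the (boundary of the) square centered at z, with orthonormal
directions v, w and half side length t. -/
def sqSide1 (z v w : EuclideanSpace ℝ (Fin 2)) (t : ℝ) : Set (EuclideanSpace ℝ (Fin 2)) :=
  (fun a : ℝ => z + a • v - t • w) '' Icc (-t) t

def sqSide2 (z v w : EuclideanSpace ℝ (Fin 2)) (t : ℝ) : Set (EuclideanSpace ℝ (Fin 2)) :=
  (fun b : ℝ => z + t • v + b • w) '' Icc (-t) t

def sqSide3 (z v w : EuclideanSpace ℝ (Fin 2)) (t : ℝ) : Set (EuclideanSpace ℝ (Fin 2)) :=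
  (fun a : ℝ => z + a • v + t • w) '' Icc (-t) t

def sqSide4 (z v w : EuclideanSpace ℝ (Fin 2)) (t : ℝ) : Set (EuclideanSpace ℝ (Fin 2)) :=
  (fun b : ℝ => z - t • v + b • w) '' Icc (-t) t

/-- The boundary Q of the square. -/
def squareBdry (z v w : EuclideanSpace ℝ (Fin 2)) (t : ℝ) : Set (EuclideanSpace ℝ (Fin 2)) :=
  sqSide1 z v w t ∪ sqSide2 z v w t ∪ sqSide3 z v w t ∪ sqSide4 z v w t

/-- The one-dimensional Gagliardo H^{(1+s)/2}-seminorm (squared) of u along a segment L,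
with respect to the 1-dimensional Hausdorff measure. -/
def segSeminorm (s : ℝ) (u : EuclideanSpace ℝ (Fin 2) → ℂ)
    (L : Set (EuclideanSpace ℝ (Fin 2))) : ℝ≥0∞ :=
  ∫⁻ x in L, ∫⁻ y in L,
    ENNReal.ofReal (‖u x - u y‖ ^ 2 / dist x y ^ (2 + s)) ∂μH[1] ∂μH[1]

/-- One-dimensional Gagliardo energy on `(a, b]`. -/
def gagE (s : ℝ) (f : ℝ → ℂ) (a b : ℝ) : ℝ≥0∞ :=
  ∫⁻ x in Ioc a b, ∫⁻ y in Ioc a b, ENNReal.ofReal (‖f x - f y‖ ^ 2 / |x - y| ^ (2 + s))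

/-- Shift energy. -/
def shiftF (f : ℝ → ℂ) (a b h : ℝ) : ℝ≥0∞ :=
  ∫⁻ x in Ioc a (b - h), ENNReal.ofReal (‖f x - f (x + h)‖ ^ 2)

/-- Truncated radial energy. -/
def radW (s : ℝ) (f : ℝ → ℂ) (a b r : ℝ) : ℝ≥0∞ :=
  ∫⁻ h in Ioc 0 r, shiftF f a b h * ENNReal.ofReal (h ^ (-(2 + s)))

lemma tonelli_shift (A B : Set ℝ) (hA : MeasurableSet A) (hB : MeasurableSet B)
    (K : ℝ → ℝ → ℝ≥0∞) (hK : Measurable (Function.uncurry K)) :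
    ∫⁻ x in A, ∫⁻ y in B, K x y =
      ∫⁻ h, ∫⁻ x, (A ∩ {x | x + h ∈ B}).indicator (fun x => K x (x + h)) x := by
  classical
  have e1 : ∀ x, A.indicator (fun x => ∫⁻ y in B, K x y) x
      = ∫⁻ y, (A ×ˢ B).indicator (Function.uncurry K) (x, y) := by
    intro x
    by_cases hx : x ∈ A
    · rw [indicator_of_mem hx, ← lintegral_indicator hB]
      refine lintegral_congr fun y => ?_
      by_cases hy : y ∈ B <;> simp [indicator, hx, hy]
    · simp [indicator, hx]
  have hG : Measurable ((A ×ˢ B).indicator (Function.uncurry K)) :=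
    hK.indicator (hA.prod hB)
  rw [← lintegral_indicator hA]
  simp_rw [e1]
  have e2 : ∀ x, ∫⁻ y, (A ×ˢ B).indicator (Function.uncurry K) (x, y)
      = ∫⁻ h, (A ×ˢ B).indicator (Function.uncurry K) (x, x + h) := fun x =>
    (lintegral_add_left_eq_self (fun y => (A ×ˢ B).indicator (Function.uncurry K) (x, y)) x).symm
  simp_rw [e2]
  rw [lintegral_lintegral_swap]
  · refine lintegral_congr fun h => lintegral_congr fun x => ?_
    simp [indicator]
  · have : Measurable (fun p : ℝ × ℝ => (A ×ˢ B).indicator (Function.uncurry K) (p.1, p.1 + p.2)) :=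
      hG.comp (by fun_prop)
    exact this.aemeasurable

lemma radW_le_gagE {s : ℝ} {f : ℝ → ℂ} (hf : Continuous f) (a b : ℝ) :
    radW s f a b (b - a) ≤ gagE s f a b := by
  have hm : Measurable (Function.uncurry
      (fun x y => ENNReal.ofReal (‖f x - f y‖ ^ 2 / |x - y| ^ (2 + s)))) := by
    have := hf.measurable
    unfold Function.uncurry
    fun_prop
  unfold gagE radW
  rw [tonelli_shift _ _ measurableSet_Ioc measurableSet_Ioc _ hm,
    ← lintegral_indicator measurableSet_Ioc]
  refine lintegral_mono fun h => ?_
  by_cases hh : h ∈ Ioc 0 (b - a)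
  · rw [indicator_of_mem hh]
    unfold shiftF
    rw [← lintegral_mul_const' _ _ ENNReal.ofReal_ne_top, ← lintegral_indicator measurableSet_Ioc]
    refine lintegral_mono fun x => ?_
    by_cases hx : x ∈ Ioc a (b - h)
    · have hx' : x ∈ Ioc a b ∩ {x | x + h ∈ Ioc a b} := by
        simp only [mem_Ioc, mem_inter_iff, mem_ofPred_eq] at *
        refine ⟨⟨?_, ?_⟩, ?_, ?_⟩ <;> linarith
      rw [indicator_of_mem hx, indicator_of_mem hx', ← ENNReal.ofReal_mul (by positivity)]
      apply le_of_eq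
      congr 1
      have : |x - (x + h)| = h := by
        rw [show x - (x + h) = -h by ring, abs_neg, abs_of_pos hh.1]
      rw [this, Real.rpow_neg hh.1.le, div_eq_mul_inv]
    · rw [indicator_of_notMem hx]; exact zero_le
  · rw [indicator_of_notMem hh]; exact zero_le

lemma quarter_le {f : ℝ → ℂ} (hf : Continuous f) (a b : ℝ) :
    ∫⁻ x in Ioc a (a + (b - a) / 4), ∫⁻ y in Ioc (b - (b - a) / 4) b,
      ENNReal.ofReal (‖f x - f y‖ ^ 2)
    ≤ ∫⁻ h in Ioc ((b - a) / 2) (b - a), shiftF f a b h := by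
  have hm : Measurable (Function.uncurry
      (fun x y => ENNReal.ofReal (‖f x - f y‖ ^ 2))) := by
    have := hf.measurable
    unfold Function.uncurry
    fun_prop
  rw [tonelli_shift _ _ measurableSet_Ioc measurableSet_Ioc _ hm,
    ← lintegral_indicator measurableSet_Ioc]
  refine lintegral_mono fun h => ?_
  by_cases hh : h ∈ Ioc ((b - a) / 2) (b - a)
  · rw [indicator_of_mem hh]
    unfold shiftF
    rw [← lintegral_indicator measurableSet_Ioc]
    refine lintegral_mono fun x => ?_
    refine indicator_le_indicator_of_subset ?_ (fun _ => zero_le) x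
    intro x hx
    simp only [mem_Ioc, mem_inter_iff, mem_ofPred_eq] at *
    refine ⟨?_, ?_⟩ <;> linarith
  · rw [indicator_of_notMem hh]
    refine le_of_eq ?_
    rw [lintegral_eq_zero_of_ae_eq_zero]
    refine Filter.Eventually.of_forall fun x => ?_
    apply indicator_of_notMem
    intro hx
    apply hh
    simp only [mem_Ioc, mem_inter_iff, mem_ofPred_eq] at *
    refine ⟨?_, ?_⟩ <;> linarith

lemma shiftF_two {f : ℝ → ℂ} (hf : Continuous f) (a b : ℝ) {h : ℝ} (hh : 0 < h) :
    shiftF f a b (2 * h) ≤ 4 * shiftF f a b h := by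
  have hfm := hf.measurable
  have key : ∀ x, ENNReal.ofReal (‖f x - f (x + 2 * h)‖ ^ 2) ≤
      2 * ENNReal.ofReal (‖f x - f (x + h)‖ ^ 2) +
      2 * ENNReal.ofReal (‖f (x + h) - f (x + h + h)‖ ^ 2) := by
    intro x
    rw [show (2 : ℝ≥0∞) = ENNReal.ofReal 2 by simp, ← ENNReal.ofReal_mul (by norm_num),
      ← ENNReal.ofReal_mul (by norm_num), ← ENNReal.ofReal_add (by positivity) (by positivity)]
    apply ENNReal.ofReal_le_ofReal
    have e : x + 2 * h = x + h + h := by ring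
    rw [e]
    have := norm_sub_le_norm_sub_add_norm_sub (f x) (f (x + h)) (f (x + h + h))
    nlinarith [sq_nonneg (‖f x - f (x + h)‖ - ‖f (x + h) - f (x + h + h)‖),
      norm_nonneg (f x - f (x + h + h)), norm_nonneg (f x - f (x + h)),
      norm_nonneg (f (x + h) - f (x + h + h))]
  have i1 : ∫⁻ x in Ioc a (b - 2 * h), ENNReal.ofReal (‖f x - f (x + h)‖ ^ 2) ≤ shiftF f a b h :=
    lintegral_mono_set (Ioc_subset_Ioc_right (by linarith))
  have i2 : ∫⁻ x in Ioc a (b - 2 * h), ENNReal.ofReal (‖f (x + h) - f (x + h + h)‖ ^ 2)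
      ≤ shiftF f a b h := by
    unfold shiftF
    rw [← lintegral_indicator measurableSet_Ioc, ← lintegral_indicator measurableSet_Ioc]
    rw [← lintegral_add_right_eq_self
      (fun x => (Ioc a (b - h)).indicator (fun x => ENNReal.ofReal (‖f x - f (x + h)‖ ^ 2)) x) h]
    refine lintegral_mono fun x => ?_
    by_cases hx : x ∈ Ioc a (b - 2 * h)
    · have hx' : x + h ∈ Ioc a (b - h) := by
        simp only [mem_Ioc] at *
        refine ⟨?_, ?_⟩ <;> linarith
      simp only [indicator_of_mem hx, indicator_of_mem hx', le_refl]
    · rw [indicator_of_notMem hx]; exact zero_le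
  calc shiftF f a b (2 * h) ≤ ∫⁻ x in Ioc a (b - 2 * h),
        (2 * ENNReal.ofReal (‖f x - f (x + h)‖ ^ 2) +
      2 * ENNReal.ofReal (‖f (x + h) - f (x + h + h)‖ ^ 2)) := lintegral_mono key
    _ = 2 * (∫⁻ x in Ioc a (b - 2 * h), ENNReal.ofReal (‖f x - f (x + h)‖ ^ 2)) +
        2 * ∫⁻ x in Ioc a (b - 2 * h), ENNReal.ofReal (‖f (x + h) - f (x + h + h)‖ ^ 2) := by
      rw [lintegral_add_left (by fun_prop), lintegral_const_mul' _ _ (by simp),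
        lintegral_const_mul' _ _ (by simp)]
    _ ≤ 2 * shiftF f a b h + 2 * shiftF f a b h := by gcongr
    _ = 4 * shiftF f a b h := by rw [← add_mul]; norm_num

lemma radW_half {s : ℝ} {f : ℝ → ℂ} (hf : Continuous f) (a b : ℝ) (r : ℝ) :
    radW s f a b r ≤ ENNReal.ofReal (2 ^ (1 - s)) * radW s f a b (r / 2) := by
  unfold radW
  have hem : MeasurableEmbedding (fun x : ℝ => 2 * x) :=
    (Homeomorph.mulLeft₀ (2 : ℝ) two_ne_zero).measurableEmbedding
  rw [← lintegral_indicator measurableSet_Ioc]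
  conv_lhs => rw [← Real.smul_map_volume_mul_left (two_ne_zero (α := ℝ))]
  rw [lintegral_smul_measure, hem.lintegral_map, ← lintegral_indicator measurableSet_Ioc,
    smul_eq_mul, ← lintegral_const_mul' _ _ ENNReal.ofReal_ne_top,
    ← lintegral_const_mul' _ _ ENNReal.ofReal_ne_top]
  refine lintegral_mono fun h => ?_
  by_cases hh : h ∈ Ioc 0 (r / 2)
  · have hh' : 2 * h ∈ Ioc 0 r := by
      simp only [mem_Ioc] at *
      refine ⟨?_, ?_⟩ <;> linarith
    rw [indicator_of_mem hh, indicator_of_mem hh']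
    have e : ENNReal.ofReal |2| * (4 * ENNReal.ofReal ((2 * h) ^ (-(2 + s)))) =
        ENNReal.ofReal (2 ^ (1 - s)) * ENNReal.ofReal (h ^ (-(2 + s))) := by
      rw [show (4 : ℝ≥0∞) = ENNReal.ofReal 4 by simp, ← ENNReal.ofReal_mul (by norm_num),
        ← ENNReal.ofReal_mul (by norm_num), ← ENNReal.ofReal_mul (by positivity)]
      congr 1
      rw [Real.mul_rpow (by norm_num) hh.1.le, show (1 - s) = 3 + (-(2 + s)) by ring,
        Real.rpow_add (by norm_num)]
      norm_num
      ring
    calc ENNReal.ofReal |2| * (shiftF f a b (2 * h) * ENNReal.ofReal ((2 * h) ^ (-(2 + s))))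
        ≤ ENNReal.ofReal |2| * (4 * shiftF f a b h * ENNReal.ofReal ((2 * h) ^ (-(2 + s)))) := by
          gcongr
          exact shiftF_two hf a b hh.1
      _ = shiftF f a b h *
          (ENNReal.ofReal |2| * (4 * ENNReal.ofReal ((2 * h) ^ (-(2 + s))))) := by ring
      _ = _ := by rw [e]; ring
  · have hh' : 2 * h ∉ Ioc 0 r := by
      intro hc
      apply hh
      simp only [mem_Ioc] at *
      refine ⟨?_, ?_⟩ <;> linarith
    rw [indicator_of_notMem hh']; simp

/-- The annulus estimate with the `1 - s` gain. -/
lemma quarter_energy {s : ℝ} (hs0 : 0 < s) (hs1 : s < 1) {f : ℝ → ℂ} (hf : Continuous f)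
    {a b : ℝ} (hab : a < b) :
    ∫⁻ x in Ioc a (a + (b - a) / 4), ∫⁻ y in Ioc (b - (b - a) / 4) b,
      ENNReal.ofReal (‖f x - f y‖ ^ 2)
    ≤ ENNReal.ofReal ((1 - s) * (b - a) ^ (2 + s)) * gagE s f a b := by
  set l := b - a with hl
  have hl0 : 0 < l := by linarith
  refine (quarter_le hf a b).trans ?_
  rw [← hl]
  set A := ∫⁻ h in Ioc (l / 2) l, shiftF f a b h * ENNReal.ofReal (h ^ (-(2 + s))) with hA
  have hsplit : radW s f a b l = radW s f a b (l / 2) + A := by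
    unfold radW
    rw [hA, ← lintegral_union measurableSet_Ioc (Ioc_disjoint_Ioc_of_le le_rfl),
      Ioc_union_Ioc_eq_Ioc (by linarith) (by linarith)]
  have h2 : (2 : ℝ) ^ (1 - s) ≤ 1 + (1 - s) := by
    have := rpow_one_add_le_one_add_mul_self (s := 1) (by norm_num) (p := 1 - s)
      (by linarith) (by linarith)
    norm_num at this
    linarith
  have hAle : A ≤ ENNReal.ofReal (1 - s) * radW s f a b l := by
    by_cases hfin : radW s f a b (l / 2) = ∞
    · rw [hsplit, hfin, top_add, ENNReal.mul_top]
      · exact le_top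
      · simp; linarith
    · have h3 : radW s f a b (l / 2) + A ≤
          radW s f a b (l / 2) + ENNReal.ofReal (1 - s) * radW s f a b (l / 2) := by
        rw [← hsplit]
        refine (radW_half hf a b l).trans ?_
        rw [← one_add_mul, ← ENNReal.ofReal_one, ← ENNReal.ofReal_add (by norm_num) (by linarith)]
        gcongr
      have h4 := (ENNReal.add_le_add_iff_left hfin).1 h3
      refine h4.trans ?_
      gcongr
      rw [hsplit]
      exact le_self_add
  have hlow : (∫⁻ h in Ioc (l / 2) l, shiftF f a b h) * ENNReal.ofReal (l ^ (-(2 + s))) ≤ A := by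
    rw [← lintegral_mul_const' _ _ ENNReal.ofReal_ne_top]
    refine setLIntegral_mono' measurableSet_Ioc fun h hh => ?_
    have h0 : 0 < h := by have := hh.1; linarith
    refine mul_le_mul_right (ENNReal.ofReal_le_ofReal ?_) _
    exact Real.rpow_le_rpow_of_nonpos h0 hh.2 (by linarith)
  have hone : ENNReal.ofReal (l ^ (-(2 + s))) * ENNReal.ofReal (l ^ (2 + s)) = 1 := by
    rw [← ENNReal.ofReal_mul (by positivity), ← Real.rpow_add hl0]
    simp
  calc ∫⁻ h in Ioc (l / 2) l, shiftF f a b h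
      = (∫⁻ h in Ioc (l / 2) l, shiftF f a b h) * ENNReal.ofReal (l ^ (-(2 + s)))
        * ENNReal.ofReal (l ^ (2 + s)) := by rw [mul_assoc, hone, mul_one]
    _ ≤ (ENNReal.ofReal (1 - s) * gagE s f a b) * ENNReal.ofReal (l ^ (2 + s)) := by
      refine mul_le_mul_left ((hlow.trans hAle).trans ?_) _
      gcongr
      exact radW_le_gagE hf a b
    _ = _ := by
      rw [ENNReal.ofReal_mul (by linarith)]; ring

lemma jensen_sq {f : ℝ → ℂ} (hf : Continuous f) {p q : ℝ} (hpq : p < q) (c : ℂ) :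
    ENNReal.ofReal ((q - p) * ‖(⨍ x in Ioc p q, f x) - c‖ ^ 2) ≤
      ∫⁻ x in Ioc p q, ENNReal.ofReal (‖f x - c‖ ^ 2) := by
  have hconv : ConvexOn ℝ univ (fun z : ℂ => ‖z - c‖ ^ 2) := by
    have h1 : ConvexOn ℝ univ (fun z : ℂ => ‖z - c‖) := by
      have := (convexOn_univ_norm (E := ℂ)).translate_left (-c)
      simpa [Function.comp_def, sub_eq_add_neg] using this
    exact h1.pow (fun _ _ => norm_nonneg _) 2
  have hv : volume (Ioc p q) = ENNReal.ofReal (q - p) := Real.volume_Ioc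
  have hi : IntegrableOn (fun x => ‖f x - c‖ ^ 2) (Ioc p q) :=
    ((by fun_prop : Continuous fun x => ‖f x - c‖ ^ 2).integrableOn_Icc).mono_set
      Ioc_subset_Icc_self
  have h := hconv.map_set_average_le (μ := volume) (t := Ioc p q) (f := f)
    (by fun_prop) isClosed_univ (by rw [hv]; simp [hpq]) (by rw [hv]; simp) (by simp)
    (hf.integrableOn_Icc.mono_set Ioc_subset_Icc_self) hi
  rw [← ofReal_integral_eq_lintegral_ofReal hi (Filter.Eventually.of_forall fun x => by positivity)]
  apply ENNReal.ofReal_le_ofReal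
  rw [setAverage_eq (f := fun x => ‖f x - c‖ ^ 2)] at h
  have hr : volume.real (Ioc p q) = q - p := by
    rw [measureReal_def, hv, ENNReal.toReal_ofReal (by linarith)]
  rw [hr, smul_eq_mul] at h
  have hp : 0 < q - p := by linarith
  calc (q - p) * ‖(⨍ x in Ioc p q, f x) - c‖ ^ 2
      ≤ (q - p) * ((q - p)⁻¹ * ∫ x in Ioc p q, ‖f x - c‖ ^ 2) := by gcongr
    _ = _ := by field_simp

lemma avg_diff {f : ℝ → ℂ} (hf : Continuous f) {p q p' q' : ℝ} (hpq : p < q) (hpq' : p' < q') :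
    ENNReal.ofReal ((q - p) * (q' - p') * ‖(⨍ x in Ioc p q, f x) - ⨍ y in Ioc p' q', f y‖ ^ 2) ≤
      ∫⁻ x in Ioc p q, ∫⁻ y in Ioc p' q', ENNReal.ofReal (‖f x - f y‖ ^ 2) := by
  have h1 : ∀ x, ENNReal.ofReal (q' - p') * ENNReal.ofReal (‖f x - ⨍ y in Ioc p' q', f y‖ ^ 2) ≤
      ∫⁻ y in Ioc p' q', ENNReal.ofReal (‖f x - f y‖ ^ 2) := by
    intro x
    have := jensen_sq hf hpq' (f x)
    simp_rw [norm_sub_rev _ (f x)] at this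
    rwa [ENNReal.ofReal_mul (by linarith)] at this
  have h2 := jensen_sq hf hpq (⨍ y in Ioc p' q', f y)
  calc _ = ENNReal.ofReal (q' - p') * ENNReal.ofReal
        ((q - p) * ‖(⨍ x in Ioc p q, f x) - ⨍ y in Ioc p' q', f y‖ ^ 2) := by
        rw [← ENNReal.ofReal_mul (by linarith)]; congr 1; ring
    _ ≤ ENNReal.ofReal (q' - p') *
        ∫⁻ x in Ioc p q, ENNReal.ofReal (‖f x - ⨍ y in Ioc p' q', f y‖ ^ 2) := by gcongr
    _ = ∫⁻ x in Ioc p q, ENNReal.ofReal (q' - p') *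
        ENNReal.ofReal (‖f x - ⨍ y in Ioc p' q', f y‖ ^ 2) := by
        rw [lintegral_const_mul' _ _ ENNReal.ofReal_ne_top]
    _ ≤ _ := lintegral_mono h1

lemma gagE_mono {s : ℝ} {f : ℝ → ℂ} {a b a' b' : ℝ} (ha : a ≤ a') (hb : b' ≤ b) :
    gagE s f a' b' ≤ gagE s f a b := by
  unfold gagE
  refine (lintegral_mono_set (Ioc_subset_Ioc ha hb)).trans ?_
  exact lintegral_mono fun x => lintegral_mono_set (Ioc_subset_Ioc ha hb)

lemma gagE_superadd {s : ℝ} {f : ℝ → ℂ} {a b c : ℝ} (hab : a ≤ b) (hbc : b ≤ c) :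
    gagE s f a b + gagE s f b c ≤ gagE s f a c := by
  unfold gagE
  rw [← Ioc_union_Ioc_eq_Ioc hab hbc,
    lintegral_union measurableSet_Ioc (Ioc_disjoint_Ioc_of_le le_rfl)]
  gcongr
  · exact subset_union_left
  · exact subset_union_right

/-- Comparison of averages on subintervals of the first and last quarter. -/
lemma avg_quarter {s : ℝ} (hs0 : 0 < s) (hs1 : s < 1) {f : ℝ → ℂ} (hf : Continuous f)
    {a b e : ℝ} (hab : a < b) (he : 0 ≤ e) (hE : gagE s f a b ≤ ENNReal.ofReal e)
    {p q p' q' : ℝ} (hp : a ≤ p) (hpq : p < q) (hq : q ≤ a + (b - a) / 4)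
    (hp' : b - (b - a) / 4 ≤ p') (hpq' : p' < q') (hq' : q' ≤ b)
    (hlen : (b - a) ^ 2 / 64 ≤ (q - p) * (q' - p')) :
    ‖(⨍ x in Ioc p q, f x) - ⨍ y in Ioc p' q', f y‖ ≤
      8 * √((1 - s) * e) * (b - a) ^ (s / 2) := by
  have hl : 0 < b - a := by linarith
  set N := ‖(⨍ x in Ioc p q, f x) - ⨍ y in Ioc p' q', f y‖ with hN
  have h1 : ENNReal.ofReal ((q - p) * (q' - p') * N ^ 2) ≤
      ENNReal.ofReal ((1 - s) * (b - a) ^ (2 + s) * e) := by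
    refine (avg_diff hf hpq hpq').trans ?_
    rw [ENNReal.ofReal_mul (mul_nonneg (by linarith) (by positivity))]
    refine le_trans ?_ (mul_le_mul_right hE _)
    refine le_trans ?_ (quarter_energy hs0 hs1 hf hab)
    refine (lintegral_mono_set (Ioc_subset_Ioc hp hq)).trans ?_
    exact lintegral_mono fun x => lintegral_mono_set (Ioc_subset_Ioc hp' hq')
  have h1s : 0 < 1 - s := by linarith
  have h2 := (ENNReal.ofReal_le_ofReal_iff (by positivity)).1 h1
  have h3 : (b - a) ^ 2 / 64 * N ^ 2 ≤ (1 - s) * (b - a) ^ (2 + s) * e :=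
    le_trans (by gcongr) h2
  rw [Real.rpow_add hl, Real.rpow_two] at h3
  have h4 : N ^ 2 ≤ 64 * ((1 - s) * e) * (b - a) ^ s := by
    have : (b - a) ^ 2 * N ^ 2 ≤ (b - a) ^ 2 * (64 * ((1 - s) * e) * (b - a) ^ s) := by
      nlinarith
    exact le_of_mul_le_mul_left this (by positivity)
  refine (pow_le_pow_iff_left₀ (norm_nonneg _) (by positivity) two_ne_zero).1 ?_
  rw [← hN]
  rw [mul_pow, mul_pow, Real.sq_sqrt (by positivity), ← Real.rpow_natCast ((b - a) ^ (s / 2)) 2,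
    ← Real.rpow_mul hl.le, show s / 2 * ((2 : ℕ) : ℝ) = s by push_cast; ring]
  refine h4.trans (le_of_eq ?_)
  norm_num

lemma avg_near {f : ℝ → ℂ} (hf : Continuous f) {p q : ℝ} (hpq : p < q) {c : ℂ} {ε : ℝ}
    (h : ∀ x ∈ Icc p q, ‖f x - c‖ ≤ ε) : ‖(⨍ x in Ioc p q, f x) - c‖ ≤ ε := by
  have hv : volume (Ioc p q) = ENNReal.ofReal (q - p) := Real.volume_Ioc
  have := (convex_closedBall c ε).set_average_mem (μ := volume) (t := Ioc p q) (f := f)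
    isClosed_closedBall (by rw [hv]; simp [hpq]) (by rw [hv]; simp)
    ((ae_restrict_mem measurableSet_Ioc).mono fun x hx => by
      simpa [dist_eq_norm] using h x (Ioc_subset_Icc_self hx))
    (hf.integrableOn_Icc.mono_set Ioc_subset_Icc_self)
  simpa [dist_eq_norm] using this

lemma avg_tendsto {f : ℝ → ℂ} (hf : Continuous f) {p q : ℕ → ℝ} (hpq : ∀ n, p n < q n) {a : ℝ}
    (hp : Filter.Tendsto p Filter.atTop (nhds a)) (hq : Filter.Tendsto q Filter.atTop (nhds a)) :
    Filter.Tendsto (fun n => ⨍ x in Ioc (p n) (q n), f x) Filter.atTop (nhds (f a)) := by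
  rw [Metric.tendsto_atTop']
  intro ε hε
  obtain ⟨δ, hδ, hd⟩ := Metric.continuous_iff.1 hf a (ε / 2) (by positivity)
  obtain ⟨n1, h1⟩ := Metric.tendsto_atTop'.1 hp δ hδ
  obtain ⟨n2, h2⟩ := Metric.tendsto_atTop'.1 hq δ hδ
  refine ⟨max n1 n2, fun n hn => ?_⟩
  rw [dist_eq_norm]
  refine lt_of_le_of_lt (avg_near hf (hpq n) (ε := ε / 2) fun x hx => ?_) (by linarith)
  rw [← dist_eq_norm]
  refine (hd x ?_).le
  have g1 := h1 n (lt_of_le_of_lt (le_max_left _ _) hn)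
  have g2 := h2 n (lt_of_le_of_lt (le_max_right _ _) hn)
  rw [Real.dist_eq, abs_lt] at *
  constructor <;> linarith [hx.1, hx.2]

lemma pow_scale {l s : ℝ} (hl : 0 < l) (k : ℕ) :
    (l * (1 / 4) ^ k) ^ (s / 2) = l ^ (s / 2) * ((2 : ℝ) ^ (-s)) ^ k := by
  rw [Real.mul_rpow hl.le (by positivity), ← Real.rpow_natCast, ← Real.rpow_natCast,
    ← Real.rpow_mul (by norm_num), ← Real.rpow_mul (by norm_num),
    show (1 / 4 : ℝ) = 2 ^ (-2 : ℝ) by norm_num [Real.rpow_neg], ← Real.rpow_mul (by norm_num)]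
  congr 2
  ring

lemma tendsto_quarter (a l c : ℝ) :
    Filter.Tendsto (fun k : ℕ => a + c * (l * (1 / 4) ^ k)) Filter.atTop (nhds a) := by
  have := tendsto_pow_atTop_nhds_zero_of_lt_one (r := (1 / 4 : ℝ)) (by norm_num) (by norm_num)
  have := ((this.const_mul l).const_mul c).const_add a
  simpa using this

/-- Fractional oscillation estimate on an interval, with the sharp `1 - s` factor. -/
lemma osc_est {s : ℝ} (hs0 : 0 < s) (hs1 : s < 1) {f : ℝ → ℂ} (hf : Continuous f)
    {a b e : ℝ} (hab : a < b) (he : 0 ≤ e) (hE : gagE s f a b ≤ ENNReal.ofReal e) :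
    ‖f a - f b‖ ≤ 24 / (1 - 2 ^ (-s)) * (√((1 - s) * e) * (b - a) ^ (s / 2)) := by
  set l := b - a with hl
  have hl0 : 0 < l := by linarith
  set B := 8 * √((1 - s) * e) * l ^ (s / 2) with hB
  have hB0 : 0 ≤ B := by positivity
  set ρ := (2 : ℝ) ^ (-s) with hρ
  have hρ0 : 0 < ρ := by positivity
  have hρ1 : ρ < 1 := Real.rpow_lt_one_of_one_lt_of_neg (by norm_num) (by linarith)
  have hlk : ∀ k : ℕ, 0 < l * (1 / 4) ^ k ∧ l * (1 / 4) ^ k ≤ l := fun k =>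
    ⟨by positivity, mul_le_of_le_one_right hl0.le (pow_le_one₀ (by norm_num) (by norm_num))⟩
  -- left chain
  have hleft : ‖(⨍ x in Ioc (a + 3 / 4 * (l * (1 / 4) ^ 0)) (a + 1 * (l * (1 / 4) ^ 0)), f x) - f a‖
      ≤ B / (1 - ρ) := by
    rw [← dist_eq_norm]
    refine dist_le_of_le_geometric_of_tendsto₀
      (f := fun k : ℕ => ⨍ x in Ioc (a + 3 / 4 * (l * (1 / 4) ^ k)) (a + 1 * (l * (1 / 4) ^ k)), f x)
      ρ B hρ1 (fun k => ?_) (avg_tendsto hf (fun k => ?_) (tendsto_quarter _ _ _)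
        (tendsto_quarter _ _ _))
    · obtain ⟨h1, h2⟩ := hlk k
      have e1 : l * (1 / 4) ^ (k + 1) = (l * (1 / 4) ^ k) / 4 := by ring
      have e2 := pow_scale (s := s) hl0 k
      rw [e1]
      set m := l * (1 / 4) ^ k with hm
      rw [dist_comm, dist_eq_norm]
      have := avg_quarter hs0 hs1 hf (a := a) (b := a + m) (by linarith) he
        ((gagE_mono le_rfl (by linarith)).trans hE)
        (p := a + 3 / 4 * (m / 4)) (q := a + 1 * (m / 4)) (p' := a + 3 / 4 * m) (q' := a + 1 * m)
        (by linarith) (by linarith) (by linarith) (by linarith) (by linarith) (by linarith)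
        (by nlinarith)
      rw [show a + m - a = m by ring, e2] at this
      rw [hB]
      linarith
    · linarith [(hlk k).1]
  have hright : ‖(⨍ x in Ioc (b + (-1) * (l * (1 / 4) ^ 0)) (b + (-(3 / 4)) * (l * (1 / 4) ^ 0)), f x)
      - f b‖ ≤ B / (1 - ρ) := by
    rw [← dist_eq_norm]
    refine dist_le_of_le_geometric_of_tendsto₀
      (f := fun k : ℕ =>
        ⨍ x in Ioc (b + (-1) * (l * (1 / 4) ^ k)) (b + (-(3 / 4)) * (l * (1 / 4) ^ k)), f x)
      ρ B hρ1 (fun k => ?_) (avg_tendsto hf (fun k => ?_) (tendsto_quarter _ _ _)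
        (tendsto_quarter _ _ _))
    · obtain ⟨h1, h2⟩ := hlk k
      have e1 : l * (1 / 4) ^ (k + 1) = (l * (1 / 4) ^ k) / 4 := by ring
      have e2 := pow_scale (s := s) hl0 k
      rw [e1]
      set m := l * (1 / 4) ^ k with hm
      rw [dist_eq_norm]
      have := avg_quarter hs0 hs1 hf (a := b - m) (b := b) (by linarith) he
        ((gagE_mono (by linarith) le_rfl).trans hE)
        (p' := b + (-1) * (m / 4)) (q' := b + (-(3 / 4)) * (m / 4)) (p := b + (-1) * m)
        (q := b + (-(3 / 4)) * m)
        (by linarith) (by linarith) (by linarith) (by linarith) (by linarith) (by linarith)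
        (by nlinarith)
      rw [show b - (b - m) = m by ring, e2] at this
      rw [hB]
      linarith
    · linarith [(hlk k).1]
  have hmid : ‖(⨍ x in Ioc (b + (-1) * (l * (1 / 4) ^ 0)) (b + (-(3 / 4)) * (l * (1 / 4) ^ 0)), f x)
      - ⨍ x in Ioc (a + 3 / 4 * (l * (1 / 4) ^ 0)) (a + 1 * (l * (1 / 4) ^ 0)), f x‖ ≤ B := by
    simp only [pow_zero, mul_one]
    exact avg_quarter hs0 hs1 hf hab he hE (by linarith) (by linarith) (by linarith) (by linarith)
      (by linarith) (by linarith) (by nlinarith)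
  have hBB : B ≤ B / (1 - ρ) := by
    rw [le_div_iff₀ (by linarith)]
    nlinarith
  set X := ⨍ x in Ioc (b + (-1) * (l * (1 / 4) ^ 0)) (b + (-(3 / 4)) * (l * (1 / 4) ^ 0)), f x
  set Y := ⨍ x in Ioc (a + 3 / 4 * (l * (1 / 4) ^ 0)) (a + 1 * (l * (1 / 4) ^ 0)), f x
  have htri : ‖f a - f b‖ ≤ ‖Y - f a‖ + ‖X - Y‖ + ‖X - f b‖ := by
    have e : f a - f b = -(Y - f a) - (X - Y) + (X - f b) := by ring
    rw [e]
    refine (norm_add_le _ _).trans ?_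
    gcongr
    refine (norm_sub_le _ _).trans ?_
    rw [norm_neg]
  have e3 : 24 / (1 - ρ) * (√((1 - s) * e) * l ^ (s / 2)) = 3 * (B / (1 - ρ)) := by
    rw [hB]; ring
  rw [e3]
  linarith

/-- Lower bound for the energy on one step. -/
lemma step_est {s₀ s : ℝ} (hs0 : 0 < s₀) (hs : s₀ ≤ s) (hs1 : s < 1) {f : ℝ → ℂ}
    (hf : Continuous f) {a b t κ : ℝ} (hab : a < b) (hκ : 0 < κ) (hk : ‖f a - f b‖ = κ)
    (ht : 0 < t) (hbt : b - a ≤ 2 * t) :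
    ENNReal.ofReal (κ ^ 2 * (1 - 2 ^ (-s₀)) ^ 2 / 1152 / (1 - s) * t ^ (-s)) ≤ gagE s f a b := by
  by_contra! hlt
  set e := κ ^ 2 * (1 - 2 ^ (-s₀)) ^ 2 / 1152 / (1 - s) * t ^ (-s) with he
  have h1s : 0 < 1 - s := by linarith
  have hr1 : (2 : ℝ) ^ (-s) ≤ 2 ^ (-s₀) :=
    Real.rpow_le_rpow_of_exponent_le (by norm_num) (by linarith)
  have hr2 : (2 : ℝ) ^ (-s₀) < 1 := Real.rpow_lt_one_of_one_lt_of_neg (by norm_num) (by linarith)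
  have hD0 : 0 < 1 - (2 : ℝ) ^ (-s₀) := by linarith
  have hD : 0 < 1 - (2 : ℝ) ^ (-s) := by linarith
  have he0 : 0 < e := by positivity
  have hbt' : (b - a) ^ s < 2 * t ^ s := by
    calc (b - a) ^ s ≤ (2 * t) ^ s := Real.rpow_le_rpow (by linarith) hbt (by linarith)
      _ = 2 ^ s * t ^ s := Real.mul_rpow (by norm_num) ht.le
      _ < 2 * t ^ s := by
        gcongr
        calc (2 : ℝ) ^ s < 2 ^ (1 : ℝ) := Real.rpow_lt_rpow_of_exponent_lt (by norm_num) hs1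
          _ = 2 := by norm_num
  have h := osc_est (by linarith) hs1 hf hab he0.le hlt.le
  rw [hk] at h
  have h2 : κ ^ 2 ≤ (24 / (1 - 2 ^ (-s)) * (√((1 - s) * e) * (b - a) ^ (s / 2))) ^ 2 := by gcongr
  have hab' : 0 < b - a := by linarith
  rw [mul_pow, mul_pow, Real.sq_sqrt (by positivity), ← Real.rpow_natCast ((b - a) ^ (s / 2)) 2,
    ← Real.rpow_mul hab'.le, show s / 2 * ((2 : ℕ) : ℝ) = s by push_cast; ring] at h2
  have hte : t ^ (-s) * t ^ s = 1 := by
    rw [← Real.rpow_add ht]; simp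
  have h3 : (1 - s) * e * (b - a) ^ s < κ ^ 2 * (1 - 2 ^ (-s₀)) ^ 2 / 576 := by
    calc (1 - s) * e * (b - a) ^ s < (1 - s) * e * (2 * t ^ s) := by gcongr
      _ = κ ^ 2 * (1 - 2 ^ (-s₀)) ^ 2 / 576 * (t ^ (-s) * t ^ s) := by
        rw [he]; field_simp; ring
      _ = _ := by rw [hte, mul_one]
  have h4 : (24 / (1 - (2 : ℝ) ^ (-s))) ^ 2 ≤ (24 / (1 - 2 ^ (-s₀))) ^ 2 := by gcongr
  have h5 : κ ^ 2 < (24 / (1 - (2 : ℝ) ^ (-s₀))) ^ 2 * (κ ^ 2 * (1 - 2 ^ (-s₀)) ^ 2 / 576) := by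
    calc κ ^ 2 ≤ _ := h2
      _ ≤ (24 / (1 - (2 : ℝ) ^ (-s₀))) ^ 2 * ((1 - s) * e * (b - a) ^ s) := by gcongr
      _ < _ := by gcongr
  have h6 : (24 / (1 - (2 : ℝ) ^ (-s₀))) ^ 2 * (κ ^ 2 * (1 - 2 ^ (-s₀)) ^ 2 / 576) = κ ^ 2 := by
    field_simp; norm_num
  linarith

lemma exp_step (ε x y : ℝ) (hε : ε = 1 ∨ ε = -1) (h : y = x + ε / 16) :
    ‖Complex.exp (2 * Real.pi * Complex.I * x) - Complex.exp (2 * Real.pi * Complex.I * y)‖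
      = 2 * Real.sin (Real.pi / 16) := by
  have e : Complex.exp (2 * Real.pi * Complex.I * x) - Complex.exp (2 * Real.pi * Complex.I * y)
      = - (Complex.exp ((2 * Real.pi * x : ℝ) * Complex.I) *
        (Complex.exp (Complex.I * (2 * Real.pi * (ε / 16) : ℝ)) - 1)) := by
    rw [mul_sub, ← Complex.exp_add, h]
    push_cast
    ring_nf
  rw [e, norm_neg, norm_mul, Complex.norm_exp_ofReal_mul_I, one_mul,
    Complex.norm_exp_I_mul_ofReal_sub_one]
  have hpos : 0 < Real.sin (Real.pi / 16) :=
    Real.sin_pos_of_pos_of_lt_pi (by positivity) (by linarith [Real.pi_pos])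
  rcases hε with rfl | rfl
  · rw [show 2 * Real.pi * (1 / 16) / 2 = Real.pi / 16 by ring, Real.norm_eq_abs,
      abs_of_pos (by positivity)]
  · rw [show 2 * Real.pi * (-1 / 16) / 2 = -(Real.pi / 16) by ring, Real.sin_neg, mul_neg, norm_neg,
      Real.norm_eq_abs, abs_of_pos (by positivity)]

lemma chain_est {s : ℝ} {f : ℝ → ℂ} {g : ℝ → ℝ} {ε t : ℝ} {m : ℝ≥0∞} (hε : ε = 1 ∨ ε = -1)
    (hm : ∀ a b, a < b → b - a ≤ 2 * t → ‖f a - f b‖ = 2 * Real.sin (Real.pi / 16) →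
      m ≤ gagE s f a b)
    (n : ℕ) : ∀ p q : ℝ, p ≤ q → q - p ≤ 2 * t → ContinuousOn g (Icc p q) →
      (∀ x ∈ Icc p q, f x = Complex.exp (2 * Real.pi * Complex.I * g x)) →
      (n : ℝ) / 16 ≤ ε * (g q - g p) → n * m ≤ gagE s f p q := by
  have hε2 : ε * ε = 1 := by rcases hε with rfl | rfl <;> norm_num
  induction n with
  | zero => intros; simp
  | succ n ih =>
    intro p q hpq hqt hg hfg hn
    have hcont : ContinuousOn (fun x => ε * (g x - g p)) (Icc p q) := by fun_prop
    have hmem : (1 / 16 : ℝ) ∈ Icc (ε * (g p - g p)) (ε * (g q - g p)) := by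
      push_cast at hn
      refine ⟨by simp, ?_⟩
      have : (0 : ℝ) ≤ n := by positivity
      linarith
    obtain ⟨r, hr, hgr⟩ := intermediate_value_Icc hpq hcont hmem
    have hgr' : ε * (g r - g p) = 1 / 16 := hgr
    have hgr2 : g r = g p + ε / 16 := by
      have : ε * (ε * (g r - g p)) = ε * (1 / 16) := by rw [hgr']
      rw [← mul_assoc, hε2] at this
      linarith
    have hpr : p < r := by
      rcases hr.1.eq_or_lt with h | h
      · rw [← h] at hgr'; simp at hgr'
      · exact h
    have h1 : m ≤ gagE s f p r := by
      apply hm p r hpr (by linarith [hr.2])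
      rw [hfg p ⟨le_rfl, hpq⟩, hfg r hr]
      exact exp_step ε _ _ hε hgr2
    have h2 : n * m ≤ gagE s f r q := by
      refine ih r q hr.2 (by linarith [hr.1]) (hg.mono (Icc_subset_Icc_left hr.1))
        (fun x hx => hfg x ⟨hr.1.trans hx.1, hx.2⟩) ?_
      push_cast at hn
      have : ε * (g q - g r) = ε * (g q - g p) - ε * (g r - g p) := by ring
      rw [this, hgr']
      linarith
    calc ((n + 1 : ℕ) : ℝ≥0∞) * m = m + n * m := by push_cast; ring
      _ ≤ gagE s f p r + gagE s f r q := by gcongr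
      _ ≤ _ := gagE_superadd hr.1 hr.2

/-- The energy along an isometrically parametrized segment. -/
lemma segSeminorm_ge {s t : ℝ} {u : EuclideanSpace ℝ (Fin 2) → ℂ}
    {σ : ℝ → EuclideanSpace ℝ (Fin 2)} (hσ : Isometry σ) {f : ℝ → ℂ}
    (hf : ∀ x ∈ Icc (-t) t, f x = u (σ x)) :
    gagE s f (-t) t ≤ segSeminorm s u (σ '' Icc (-t) t) := by
  have hem : MeasurableEmbedding σ := hσ.isClosedEmbedding.measurableEmbedding
  have hmap : (μH[1] : Measure (EuclideanSpace ℝ (Fin 2))).restrict (σ '' Icc (-t) t)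
      = Measure.map σ (volume.restrict (Icc (-t) t)) := by
    have h1 := hσ.map_hausdorffMeasure (d := 1) (Or.inl zero_le_one)
    rw [hausdorffMeasure_real] at h1
    have h2 : (σ ⁻¹' (σ '' Icc (-t) t)) = Icc (-t) t := preimage_image_eq _ hσ.injective
    conv_rhs => rw [← h2]
    rw [← hem.restrict_map, h1, Measure.restrict_restrict_of_subset (image_subset_range _ _)]
  unfold segSeminorm gagE
  rw [hmap, hem.lintegral_map]
  simp_rw [hem.lintegral_map]
  refine (lintegral_mono_set Ioc_subset_Icc_self).trans ?_
  refine setLIntegral_mono' measurableSet_Icc fun x hx => ?_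
  refine (lintegral_mono_set Ioc_subset_Icc_self).trans ?_
  refine setLIntegral_mono' measurableSet_Icc fun y hy => ?_
  rw [hf x hx, hf y hy, hσ.dist_eq, Real.dist_eq]

lemma isometry_line (z v : EuclideanSpace ℝ (Fin 2)) (hv : ‖v‖ = 1) :
    Isometry (fun x : ℝ => z + x • v) := by
  refine Isometry.of_dist_eq fun x y => ?_
  rw [dist_eq_norm, add_sub_add_left_eq_sub, ← sub_smul, norm_smul, hv, mul_one, Real.dist_eq,
    Real.norm_eq_abs]

/-- The lift transported to a piece of the curve avoiding the base point. -/
lemma lift_piece {γ : ℝ → EuclideanSpace ℝ (Fin 2)} {φ : ℝ → ℝ} (hγ : Continuous γ)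
    (hφ : Continuous φ) (h01 : γ 0 = γ 1) (hinj : InjOn γ (Ico 0 1))
    {σ : ℝ → EuclideanSpace ℝ (Fin 2)} (hσ : Continuous σ) {J : Set ℝ}
    (hJ : ∀ x ∈ J, σ x ∈ γ '' Icc 0 1) (hJ0 : ∀ x ∈ J, σ x ≠ γ 0) :
    ∃ g : ℝ → ℝ, ContinuousOn g J ∧
      (∀ x ∈ J, ∃ τ ∈ Icc (0 : ℝ) 1, γ τ = σ x ∧ g x = φ τ) ∧
      (∀ x ∈ J, ∀ τ ∈ Icc (0 : ℝ) 1, γ τ = σ x → g x = φ τ) := by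
  classical
  choose! τ hτ using hJ
  have hIoo : ∀ x ∈ J, ∀ r ∈ Icc (0 : ℝ) 1, γ r = σ x → r ∈ Ico (0 : ℝ) 1 := by
    intro x hx r hr hrx
    refine ⟨hr.1, lt_of_le_of_ne hr.2 ?_⟩
    rintro rfl
    exact hJ0 x hx (by rw [← hrx, h01])
  have huniq : ∀ x ∈ J, ∀ r ∈ Icc (0 : ℝ) 1, γ r = σ x → τ x = r := by
    intro x hx r hr hrx
    exact hinj (hIoo x hx _ (hτ x hx).1 (hτ x hx).2) (hIoo x hx r hr hrx)
      ((hτ x hx).2.trans hrx.symm)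
  have hcont : ContinuousOn τ J := by
    rw [continuousOn_iff_isClosed]
    intro C hC
    refine ⟨σ ⁻¹' (γ '' (Icc 0 1 ∩ C)), ?_, ?_⟩
    · exact (((isCompact_Icc.inter_right hC).image hγ).isClosed).preimage hσ
    · ext x
      constructor
      · rintro ⟨h1, h2⟩
        exact ⟨⟨τ x, ⟨(hτ x h2).1, h1⟩, (hτ x h2).2⟩, h2⟩
      · rintro ⟨⟨r, ⟨hr, hrC⟩, hrx⟩, h2⟩
        refine ⟨?_, h2⟩
        rw [mem_preimage, huniq x h2 r hr hrx]
        exact hrC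
  refine ⟨φ ∘ τ, hφ.comp_continuousOn hcont, fun x hx => ⟨τ x, (hτ x hx).1, (hτ x hx).2, rfl⟩,
    fun x hx r hr hrx => ?_⟩
  simp [huniq x hx r hr hrx]

/-- Parametrizations of the four sides. -/
def sideMap (z v w : EuclideanSpace ℝ (Fin 2)) (t : ℝ) (i : Fin 4) (x : ℝ) :
    EuclideanSpace ℝ (Fin 2) :=
  (![z - t • w, z + t • v, z + t • w, z - t • v] i) + x • (![v, w, v, w] i)

lemma squareBdry_eq (z v w : EuclideanSpace ℝ (Fin 2)) (t : ℝ) :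
    squareBdry z v w t = ⋃ i, sideMap z v w t i '' Icc (-t) t := by
  have h1 : sqSide1 z v w t = sideMap z v w t 0 '' Icc (-t) t := by
    unfold sqSide1
    refine image_congr fun x _ => ?_
    simp [sideMap]; abel
  have h2 : sqSide2 z v w t = sideMap z v w t 1 '' Icc (-t) t := rfl
  have h3 : sqSide3 z v w t = sideMap z v w t 2 '' Icc (-t) t := by
    unfold sqSide3
    refine image_congr fun x _ => ?_
    simp [sideMap]; abel
  have h4 : sqSide4 z v w t = sideMap z v w t 3 '' Icc (-t) t := rfl
  unfold squareBdry
  rw [h1, h2, h3, h4]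
  ext p
  simp only [mem_union, mem_iUnion, Fin.exists_fin_succ, Fin.exists_fin_zero]
  simp [or_assoc]

lemma seg_le_sum (s : ℝ) (u : EuclideanSpace ℝ (Fin 2) → ℂ)
    (z v w : EuclideanSpace ℝ (Fin 2)) (t : ℝ) (i : Fin 4) :
    segSeminorm s u (sideMap z v w t i '' Icc (-t) t) ≤
      segSeminorm s u (sqSide1 z v w t) + segSeminorm s u (sqSide2 z v w t)
            + segSeminorm s u (sqSide3 z v w t) + segSeminorm s u (sqSide4 z v w t) := by
  have h1 : sqSide1 z v w t = sideMap z v w t 0 '' Icc (-t) t := by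
    unfold sqSide1
    refine image_congr fun x _ => ?_
    simp [sideMap]; abel
  have h2 : sqSide2 z v w t = sideMap z v w t 1 '' Icc (-t) t := rfl
  have h3 : sqSide3 z v w t = sideMap z v w t 2 '' Icc (-t) t := by
    unfold sqSide3
    refine image_congr fun x _ => ?_
    simp [sideMap]; abel
  have h4 : sqSide4 z v w t = sideMap z v w t 3 '' Icc (-t) t := rfl
  rw [h1, h2, h3, h4]
  fin_cases i
  · exact (le_self_add.trans le_self_add).trans le_self_add
  · exact (le_add_self.trans le_self_add).trans le_self_add
  · exact le_add_self.trans le_self_add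
  · exact le_add_self

/-- Some side carries an arc on which the lift varies by at least `d / 16`. -/
lemma exists_arc {z v w : EuclideanSpace ℝ (Fin 2)} {t : ℝ}
    (hv : ‖v‖ = 1) (hw : ‖w‖ = 1) {u : EuclideanSpace ℝ (Fin 2) → ℂ}
    {γ : ℝ → EuclideanSpace ℝ (Fin 2)} {φ : ℝ → ℝ} (hγ : Continuous γ)
    (hφ : Continuous φ) (h01 : γ 0 = γ 1) (hinj : InjOn γ (Ico 0 1))
    (him : γ '' Icc 0 1 = squareBdry z v w t)
    (hu : ∀ τ ∈ Icc (0 : ℝ) 1, u (γ τ) = Complex.exp (2 * Real.pi * Complex.I * φ τ))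
    {d : ℕ} (hd : |φ 1 - φ 0| = d) (hd0 : 0 < d) :
    ∃ (i : Fin 4) (g : ℝ → ℝ) (p q : ℝ), -t ≤ p ∧ p ≤ q ∧ q ≤ t ∧ ContinuousOn g (Icc p q) ∧
      (∀ x ∈ Icc p q, u (sideMap z v w t i x) = Complex.exp (2 * Real.pi * Complex.I * g x)) ∧
      (d : ℝ) / 16 ≤ |g q - g p| := by
  have hiso : ∀ i, Isometry (sideMap z v w t i) := by
    intro i
    refine isometry_line _ _ ?_
    fin_cases i <;> simp [hv, hw]
  have hx0 : ∀ i, ∃ x0, ∀ x ∈ Icc (-t) t, sideMap z v w t i x = γ 0 ↔ x = x0 := by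
    intro i
    by_cases h : ∃ y ∈ Icc (-t) t, sideMap z v w t i y = γ 0
    · obtain ⟨y, hy, hyx⟩ := h
      refine ⟨y, fun x hx => ⟨fun hxx => (hiso i).injective (hxx.trans hyx.symm), ?_⟩⟩
      rintro rfl; exact hyx
    · push Not at h
      refine ⟨t + 1, fun x hx => ⟨fun hxx => (h x hx hxx).elim, fun hxx => ?_⟩⟩
      have := hx.2
      linarith
  choose x0 hx0 using hx0
  let J : Fin 4 × Bool → Set ℝ := fun k =>
    Icc (-t) t ∩ (if k.2 then Iio (x0 k.1) else Ioi (x0 k.1))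
  have hJoc : ∀ k, OrdConnected (J k) := by
    intro k
    refine ordConnected_Icc.inter ?_
    split_ifs
    · exact ordConnected_Iio
    · exact ordConnected_Ioi
  have hJne : ∀ k, ∀ x ∈ J k, x ≠ x0 k.1 := by
    rintro ⟨i, b⟩ x ⟨_, hx⟩
    cases b
    · simp at hx; exact hx.ne'
    · simp at hx; exact hx.ne
  have hex : ∀ k : Fin 4 × Bool, ∃ g : ℝ → ℝ, ContinuousOn g (J k) ∧
      (∀ x ∈ J k, ∃ τ ∈ Icc (0 : ℝ) 1, γ τ = sideMap z v w t k.1 x ∧ g x = φ τ) ∧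
      (∀ x ∈ J k, ∀ τ ∈ Icc (0 : ℝ) 1, γ τ = sideMap z v w t k.1 x → g x = φ τ) := by
    intro k
    refine lift_piece hγ hφ h01 hinj (hiso k.1).continuous (fun x hx => ?_) (fun x hx h => ?_)
    · rw [him, squareBdry_eq]
      exact mem_iUnion.2 ⟨k.1, x, hx.1, rfl⟩
    · exact hJne k x hx ((hx0 k.1 x hx.1).1 h)
  choose g hg1 hg2 hg3 using hex
  have hcover : φ '' Ioo 0 1 ⊆ ⋃ k, g k '' J k := by
    rintro _ ⟨τ, hτ, rfl⟩
    have hτ' : τ ∈ Icc (0 : ℝ) 1 := Ioo_subset_Icc_self hτ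
    have hmem : γ τ ∈ squareBdry z v w t := him ▸ mem_image_of_mem γ hτ'
    rw [squareBdry_eq] at hmem
    obtain ⟨i, x, hx, hxτ⟩ := mem_iUnion.1 hmem
    have hne : x ≠ x0 i := by
      intro h
      have h2 := (hx0 i x hx).2 h
      rw [hxτ] at h2
      have := hinj ⟨hτ.1.le, hτ.2⟩ ⟨le_rfl, zero_lt_one⟩ h2
      exact hτ.1.ne' this
    rcases lt_or_gt_of_ne hne with h | h
    · have hxJ : x ∈ J (i, true) := ⟨hx, by simpa using h⟩
      exact mem_iUnion.2 ⟨(i, true), x, hxJ, hg3 (i, true) x hxJ τ hτ' hxτ.symm⟩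
    · have hxJ : x ∈ J (i, false) := ⟨hx, by simpa using h⟩
      exact mem_iUnion.2 ⟨(i, false), x, hxJ, hg3 (i, false) x hxJ τ hτ' hxτ.symm⟩
  have hvol : ENNReal.ofReal d ≤ volume (φ '' Ioo 0 1) := by
    rcases le_total (φ 0) (φ 1) with h | h
    · rw [abs_of_nonneg (by linarith)] at hd
      rw [← hd, ← Real.volume_Ioo]
      exact measure_mono (intermediate_value_Ioo zero_le_one hφ.continuousOn)
    · rw [abs_of_nonpos (by linarith)] at hd
      rw [← hd, neg_sub, ← Real.volume_Ioo]
      exact measure_mono (intermediate_value_Ioo' zero_le_one hφ.continuousOn)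
  have hbig : ∃ k, ∃ p ∈ J k, ∃ q ∈ J k, (d : ℝ) / 16 < |g k q - g k p| := by
    by_contra! hcon
    have h1 : ∀ k, volume (g k '' J k) ≤ ENNReal.ofReal (d / 16) := by
      intro k
      refine (Real.volume_le_diam _).trans (ediam_le ?_)
      rintro _ ⟨x, hx, rfl⟩ _ ⟨y, hy, rfl⟩
      rw [edist_dist, Real.dist_eq]
      exact ENNReal.ofReal_le_ofReal (hcon k y hy x hx)
    have h2 : ENNReal.ofReal d ≤ 8 * ENNReal.ofReal (d / 16) := by
      calc ENNReal.ofReal d ≤ volume (φ '' Ioo 0 1) := hvol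
        _ ≤ volume (⋃ k, g k '' J k) := measure_mono hcover
        _ ≤ ∑ k, volume (g k '' J k) := measure_iUnion_fintype_le _ _
        _ ≤ ∑ k : Fin 4 × Bool, ENNReal.ofReal (d / 16) := Finset.sum_le_sum fun k _ => h1 k
        _ = 8 * ENNReal.ofReal (d / 16) := by norm_num
    rw [show (8 : ℝ≥0∞) = ENNReal.ofReal 8 by simp, ← ENNReal.ofReal_mul (by norm_num),
      ENNReal.ofReal_le_ofReal_iff (by positivity)] at h2
    have : (0 : ℝ) < d := by exact_mod_cast hd0
    linarith
  obtain ⟨k, p, hp, q, hq, hlt⟩ := hbig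
  have fin : ∀ p ∈ J k, ∀ q ∈ J k, p ≤ q → (d : ℝ) / 16 < |g k q - g k p| →
    ∃ (i : Fin 4) (g : ℝ → ℝ) (p q : ℝ), -t ≤ p ∧ p ≤ q ∧ q ≤ t ∧ ContinuousOn g (Icc p q) ∧
      (∀ x ∈ Icc p q, u (sideMap z v w t i x) = Complex.exp (2 * Real.pi * Complex.I * g x)) ∧
      (d : ℝ) / 16 ≤ |g q - g p| := by
    intro p hp q hq hpq hlt
    have hsub : Icc p q ⊆ J k := (hJoc k).out hp hq
    refine ⟨k.1, g k, p, q, hp.1.1, hpq, hq.1.2, (hg1 k).mono hsub, fun x hx => ?_, hlt.le⟩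
    obtain ⟨τ, hτ, h1, h2⟩ := hg2 k x (hsub hx)
    rw [← h1, h2]
    exact hu τ hτ
  rcases le_total p q with h | h
  · exact fin p hp q hq h hlt
  · exact fin q hq p hp h (by rwa [abs_sub_comm])

/-- Energy of a circle-valued map on the boundary of a square, from its degree:
for every s₀ ∈ (0,1) there is c = c(s₀) > 0 such that for every s ∈ [s₀,1), every
square Q of side length 2t with sides L₁,…,L₄, and every continuous u : Q → 𝕊¹ with
|deg(u,Q)| = d (expressed by a continuous parametrizing loop γ of Q and a continuous
lift φ with u∘γ = e^{2πiφ} and |φ(1)-φ(0)| = d), one has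
Σᵢ [u]²_{H^{(1+s)/2}(Lᵢ)} ≥ c · d/(1-s) · t^{-s}. -/
theorem stmt_7 :
    ∀ s₀ ∈ Ioo (0 : ℝ) 1, ∃ c > (0 : ℝ), ∀ s ∈ Ico s₀ 1,
      ∀ (z v w : EuclideanSpace ℝ (Fin 2)) (t : ℝ), 0 < t →
        ‖v‖ = 1 → ‖w‖ = 1 → ⟪v, w⟫ = (0 : ℝ) →
      ∀ u : EuclideanSpace ℝ (Fin 2) → ℂ,
        ContinuousOn u (squareBdry z v w t) →
        (∀ p ∈ squareBdry z v w t, ‖u p‖ = 1) →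
      ∀ d : ℕ,
        (∃ (γ : ℝ → EuclideanSpace ℝ (Fin 2)) (φ : ℝ → ℝ),
          Continuous γ ∧ Continuous φ ∧ γ 0 = γ 1 ∧ InjOn γ (Ico 0 1) ∧
          γ '' Icc 0 1 = squareBdry z v w t ∧
          (∀ τ ∈ Icc (0 : ℝ) 1,
            u (γ τ) = Complex.exp (2 * Real.pi * Complex.I * φ τ)) ∧
          |φ 1 - φ 0| = d) →
        segSeminorm s u (sqSide1 z v w t) + segSeminorm s u (sqSide2 z v w t)
            + segSeminorm s u (sqSide3 z v w t) + segSeminorm s u (sqSide4 z v w t)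
          ≥ ENNReal.ofReal (c * d / (1 - s) * t ^ (-s)) := by
  intro s₀ hs₀
  have hr2 : (2 : ℝ) ^ (-s₀) < 1 :=
    Real.rpow_lt_one_of_one_lt_of_neg (by norm_num) (by linarith [hs₀.1])
  have hD0 : 0 < 1 - (2 : ℝ) ^ (-s₀) := by linarith
  have hκ : 0 < 2 * Real.sin (Real.pi / 16) :=
    mul_pos two_pos (Real.sin_pos_of_pos_of_lt_pi (by positivity) (by linarith [Real.pi_pos]))
  refine ⟨(2 * Real.sin (Real.pi / 16)) ^ 2 * (1 - 2 ^ (-s₀)) ^ 2 / 1152, by positivity, ?_⟩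
  intro s hs z v w t ht hv hw _ u hu _ d hdeg
  obtain ⟨γ, φ, hγ, hφ, h01, hinj, him, hlift, hd⟩ := hdeg
  rcases Nat.eq_zero_or_pos d with rfl | hd0
  · simp
  obtain ⟨i, g, p, q, hp, hpq, hq, hg, hgu, hbig⟩ :=
    exists_arc hv hw hγ hφ h01 hinj him hlift hd hd0
  have hiso : Isometry (sideMap z v w t i) := by
    refine isometry_line _ _ ?_
    fin_cases i <;> simp [hv, hw]
  have hcon : ContinuousOn (fun x => u (sideMap z v w t i x)) (Icc (-t) t) := by
    refine hu.comp hiso.continuous.continuousOn fun x hx => ?_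
    rw [squareBdry_eq]
    exact mem_iUnion.2 ⟨i, x, hx, rfl⟩
  have htt : -t ≤ t := by linarith
  let f : ℝ → ℂ := IccExtend htt ((Icc (-t) t).domRestrict fun x => u (sideMap z v w t i x))
  have hf : Continuous f := (continuousOn_iff_continuous_domRestrict.1 hcon).Icc_extend'
  have hfu : ∀ x ∈ Icc (-t) t, f x = u (sideMap z v w t i x) := fun x hx => by
    simp only [f]
    rw [IccExtend_of_mem _ _ hx]
    rfl
  obtain ⟨ε, hε, hεb⟩ : ∃ ε : ℝ, (ε = 1 ∨ ε = -1) ∧ (d : ℝ) / 16 ≤ ε * (g q - g p) := by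
    rcases le_total 0 (g q - g p) with h | h
    · exact ⟨1, Or.inl rfl, by rwa [abs_of_nonneg h, ← one_mul (g q - g p)] at hbig⟩
    · exact ⟨-1, Or.inr rfl, by rwa [abs_of_nonpos h, neg_eq_neg_one_mul] at hbig⟩
  have hchain := chain_est (s := s) (f := f) (t := t) hε
    (fun a b hab hbt hk => step_est hs₀.1 hs.1 hs.2 hf hab hκ hk ht hbt) d p q hpq (by linarith) hg
    (fun x hx => by rw [hfu x ⟨hp.trans hx.1, hx.2.trans hq⟩]; exact hgu x hx) hεb
  have hfin := ((hchain.trans (gagE_mono hp hq)).trans (segSeminorm_ge hiso hfu)).trans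
    (seg_le_sum s u z v w t i)
  refine le_trans (le_of_eq ?_) hfin
  rw [← ENNReal.ofReal_natCast, ← ENNReal.ofReal_mul (by positivity)]
  congr 1
  ring

end
end

section
/- Let u_⋆(p) = p/|p| be the planar vortex on the punctured unit disk D₁ \ {0} ⊂ ℝ². Then lim_{s→1⁻} (1-s)² [u_⋆]²_{H^{(1+s)/2}(D₁)} = 2π², where the Gagliardo seminorm is [u]²_{H^α(D₁)} = ∬_{D₁×D₁} |u(x)-u(y)|²/|x-y|^{2+2α} dx dy. -/
open MeasureTheory Set Metric Filter
open scoped ENNReal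

/-- The standard planar vortex u_⋆(p) = p/|p|. -/
noncomputable def vortex2 (x : EuclideanSpace ℝ (Fin 2)) : EuclideanSpace ℝ (Fin 2) :=
  ‖x‖⁻¹ • x

noncomputable def vC (x : ℂ) : ℂ := ((‖x‖⁻¹ : ℝ) : ℂ) * x

noncomputable def kC (s : ℝ) (h : ℂ) : ℝ≥0∞ :=
  ENNReal.ofReal (‖1 - vC (1 + h)‖ ^ 2 / ‖h‖ ^ (3 + s))

lemma measurable_vC : Measurable vC := by unfold vC; fun_prop

lemma measurable_kC (s : ℝ) : Measurable (kC s) := by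
  have := measurable_vC
  unfold kC; fun_prop

lemma polar_radial (φ : ℝ → ℝ≥0∞) (hφ : Measurable φ) :
    ∫⁻ z : ℂ, φ ‖z‖ = ENNReal.ofReal (2 * Real.pi) *
      ∫⁻ r in Ioi (0:ℝ), ENNReal.ofReal r * φ r := by
  rw [← Complex.lintegral_comp_polarCoord_symm, polarCoord_target, Measure.volume_eq_prod,
    ← Measure.prod_restrict]
  simp_rw [Complex.norm_polarCoord_symm, smul_eq_mul]
  have := lintegral_prod_mul (μ := volume.restrict (Ioi (0:ℝ)))
    (ν := volume.restrict (Ioo (-Real.pi) Real.pi))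
    (f := fun r : ℝ => ENNReal.ofReal r * φ |r|) (g := fun _ => 1) (by fun_prop) (by fun_prop)
  simp only [mul_one] at this
  rw [this, mul_comm]
  congr 1
  · simp only [lintegral_const, Measure.restrict_apply_univ, Real.volume_Ioo, one_mul]
    congr 1; ring
  · refine setLIntegral_congr_fun measurableSet_Ioi fun r hr => ?_
    simp [abs_of_pos (show (0:ℝ) < r from hr)]

lemma polar_im (φ : ℝ → ℝ≥0∞) (hφ : Measurable φ) :
    ∫⁻ z : ℂ, φ ‖z‖ * ENNReal.ofReal (z.im ^ 2) = ENNReal.ofReal Real.pi *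
      ∫⁻ r in Ioi (0:ℝ), ENNReal.ofReal (r ^ 3) * φ r := by
  rw [← Complex.lintegral_comp_polarCoord_symm, polarCoord_target, Measure.volume_eq_prod,
    ← Measure.prod_restrict]
  simp_rw [Complex.norm_polarCoord_symm, smul_eq_mul]
  have h := lintegral_prod_mul (μ := volume.restrict (Ioi (0:ℝ)))
    (ν := volume.restrict (Ioo (-Real.pi) Real.pi))
    (f := fun r : ℝ => ENNReal.ofReal (r * r ^ 2) * φ |r|)
    (g := fun θ => ENNReal.ofReal (Real.sin θ ^ 2)) (by fun_prop) (by fun_prop)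
  have e : ∀ p : ℝ × ℝ, ENNReal.ofReal p.1 * (φ |p.1| *
      ENNReal.ofReal ((Complex.polarCoord.symm p).im ^ 2)) =
      ENNReal.ofReal (p.1 * p.1 ^ 2) * φ |p.1| * ENNReal.ofReal (Real.sin p.2 ^ 2) := by
    intro p
    have : (Complex.polarCoord.symm p).im = p.1 * Real.sin p.2 := by
      simp [Complex.polarCoord_symm_apply, ← Complex.ofReal_cos, ← Complex.ofReal_sin]
    rw [this, mul_pow, ENNReal.ofReal_mul (by positivity), ENNReal.ofReal_mul' (by positivity)]
    ring
  simp_rw [e]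
  rw [h, mul_comm]
  congr 1
  · rw [← ofReal_integral_eq_lintegral_ofReal]
    · rw [← integral_Ioc_eq_integral_Ioo, ← intervalIntegral.integral_of_le (by linarith [Real.pi_pos])]
      rw [integral_sin_sq]
      simp
    · exact ((by fun_prop : Continuous fun θ : ℝ => Real.sin θ ^ 2).integrableOn_Icc).mono_set
        Ioo_subset_Icc_self
    · exact ae_of_all _ fun x => by positivity
  · refine setLIntegral_congr_fun measurableSet_Ioi fun r hr => ?_
    simp only [abs_of_pos (show (0:ℝ) < r from hr)]
    congr 2; ring

lemma lint_Ioo_rpow {a R : ℝ} (ha : -1 < a) (hR : 0 < R) :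
    ∫⁻ r in Ioo (0:ℝ) R, ENNReal.ofReal (r ^ a) = ENNReal.ofReal (R ^ (a + 1) / (a + 1)) := by
  rw [← ofReal_integral_eq_lintegral_ofReal]
  · rw [← integral_Ioc_eq_integral_Ioo, ← intervalIntegral.integral_of_le hR.le,
      integral_rpow (Or.inl ha), Real.zero_rpow (by linarith), sub_zero]
  · have := intervalIntegral.intervalIntegrable_rpow' (a := 0) (b := R) ha
    rw [intervalIntegrable_iff_integrableOn_Ioo_of_le hR.le] at this
    exact this
  · filter_upwards [ae_restrict_mem measurableSet_Ioo] with x hx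
    exact Real.rpow_nonneg hx.1.le _

lemma lint_Ioi_rpow {a R : ℝ} (ha : a < -1) (hR : 0 < R) :
    ∫⁻ r in Ioi R, ENNReal.ofReal (r ^ a) = ENNReal.ofReal (-R ^ (a + 1) / (a + 1)) := by
  rw [← ofReal_integral_eq_lintegral_ofReal]
  · rw [integral_Ioi_rpow_of_lt ha hR]
  · exact integrableOn_Ioi_rpow_of_lt ha hR
  · filter_upwards [ae_restrict_mem measurableSet_Ioi] with x hx
    exact Real.rpow_nonneg (hR.le.trans (le_of_lt hx)) _

lemma lint_ball_rpow {a R : ℝ} (ha : -2 < a) (hR : 0 < R) :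
    ∫⁻ z in ball (0:ℂ) R, ENNReal.ofReal (‖z‖ ^ a) =
      ENNReal.ofReal (2 * Real.pi * (R ^ (a + 2) / (a + 2))) := by
  have h := polar_radial ((Iio R).indicator fun r => ENNReal.ofReal (r ^ a))
    (Measurable.indicator (by fun_prop) measurableSet_Iio)
  rw [← lintegral_indicator measurableSet_ball]
  rw [show (fun z : ℂ => (ball (0:ℂ) R).indicator (fun z => ENNReal.ofReal (‖z‖ ^ a)) z) =
    fun z => (Iio R).indicator (fun r => ENNReal.ofReal (r ^ a)) ‖z‖ by
      ext z; simp [indicator]]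
  rw [h, ENNReal.ofReal_mul (p := 2 * Real.pi) (by positivity)]
  congr 1
  have : a + 2 = (a + 1) + 1 := by ring
  rw [this, ← lint_Ioo_rpow (by linarith) hR, ← Ioi_inter_Iio, inter_comm,
    ← Measure.restrict_restrict measurableSet_Iio, ← lintegral_indicator measurableSet_Iio]
  refine setLIntegral_congr_fun measurableSet_Ioi fun r hr => ?_
  simp only [indicator]
  split_ifs
  · rw [← ENNReal.ofReal_mul (le_of_lt hr), Real.rpow_add_one (ne_of_gt hr), mul_comm]
  · simp

lemma lint_compl_rpow {a R : ℝ} (ha : a < -2) (hR : 0 < R) :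
    ∫⁻ z in (ball (0:ℂ) R)ᶜ, ENNReal.ofReal (‖z‖ ^ a) =
      ENNReal.ofReal (2 * Real.pi * (-R ^ (a + 2) / (a + 2))) := by
  have h := polar_radial ((Ici R).indicator fun r => ENNReal.ofReal (r ^ a))
    (Measurable.indicator (by fun_prop) measurableSet_Ici)
  rw [← lintegral_indicator measurableSet_ball.compl]
  rw [show (fun z : ℂ => ((ball (0:ℂ) R)ᶜ).indicator (fun z => ENNReal.ofReal (‖z‖ ^ a)) z) =
    fun z => (Ici R).indicator (fun r => ENNReal.ofReal (r ^ a)) ‖z‖ by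
      ext z; simp [indicator]]
  rw [h, ENNReal.ofReal_mul (p := 2 * Real.pi) (by positivity)]
  congr 1
  have : a + 2 = (a + 1) + 1 := by ring
  rw [this, ← lint_Ioi_rpow (by linarith) hR, setLIntegral_congr (Ioi_ae_eq_Ici (a := R)),
    ← inter_eq_left.2 (Ici_subset_Ioi.2 hR),
    ← Measure.restrict_restrict measurableSet_Ici, ← lintegral_indicator measurableSet_Ici]
  refine setLIntegral_congr_fun measurableSet_Ioi fun r hr => ?_
  simp only [indicator, inter_eq_left.2 (Ici_subset_Ioi.2 hR)]
  split_ifs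
  · rw [← ENNReal.ofReal_mul (le_of_lt hr), Real.rpow_add_one (ne_of_gt hr), mul_comm]
  · simp

lemma lint_ball_im {a R : ℝ} (ha : -4 < a) (hR : 0 < R) :
    ∫⁻ z in ball (0:ℂ) R, ENNReal.ofReal (z.im ^ 2 * ‖z‖ ^ a) =
      ENNReal.ofReal (Real.pi * (R ^ (a + 4) / (a + 4))) := by
  have h := polar_im ((Iio R).indicator fun r => ENNReal.ofReal (r ^ a))
    (Measurable.indicator (by fun_prop) measurableSet_Iio)
  rw [← lintegral_indicator measurableSet_ball]
  rw [show (fun z : ℂ => (ball (0:ℂ) R).indicator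
      (fun z => ENNReal.ofReal (z.im ^ 2 * ‖z‖ ^ a)) z) =
    fun z => (Iio R).indicator (fun r => ENNReal.ofReal (r ^ a)) ‖z‖ * ENNReal.ofReal (z.im ^ 2) by
      ext z; simp only [indicator, mem_ball_zero_iff, mem_Iio]
      split_ifs
      · rw [ENNReal.ofReal_mul (by positivity), mul_comm]
      · simp]
  rw [h, ENNReal.ofReal_mul (by positivity)]
  congr 1
  have : a + 4 = (a + 3) + 1 := by ring
  rw [this, ← lint_Ioo_rpow (by linarith) hR, ← Ioi_inter_Iio, inter_comm,
    ← Measure.restrict_restrict measurableSet_Iio, ← lintegral_indicator measurableSet_Iio]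
  refine setLIntegral_congr_fun measurableSet_Ioi fun r hr => ?_
  have hr' : (0:ℝ) < r := hr
  simp only [indicator]
  split_ifs
  · rw [← ENNReal.ofReal_mul (by positivity), Real.rpow_add hr', mul_comm]
    norm_cast
  · simp

lemma vC_mul (x w : ℂ) : vC (x * w) = vC x * vC w := by
  simp only [vC, norm_mul, mul_inv]; push_cast; ring

lemma norm_vC (x : ℂ) (hx : x ≠ 0) : ‖vC x‖ = 1 := by
  have : ‖x‖ ≠ 0 := by simpa using hx
  simp [vC, this]

lemma lint_mul (x : ℂ) (hx : x ≠ 0) (f : ℂ → ℝ≥0∞) (hf : Measurable f) :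
    ∫⁻ y, f y = ENNReal.ofReal (‖x‖ ^ 2) * ∫⁻ w, f (x * w) := by
  have hd : LinearMap.det (LinearMap.mul ℝ ℂ x) = ‖x‖ ^ 2 := by
    have := Algebra.norm_complex_apply x
    rw [Algebra.norm_apply] at this
    rw [← Complex.normSq_eq_norm_sq]
    exact this
  have hp : 0 < ‖x‖ := by simpa using hx
  have h := Measure.map_linearMap_addHaar_eq_smul_addHaar (volume : Measure ℂ)
    (f := LinearMap.mul ℝ ℂ x) (by rw [hd]; positivity)
  have hm : Measurable (LinearMap.mul ℝ ℂ x) := by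
    change Measurable fun w => x * w
    fun_prop
  have h2 : ∫⁻ w, f (x * w) = ∫⁻ y, f y ∂(Measure.map (LinearMap.mul ℝ ℂ x) volume) := by
    rw [lintegral_map hf hm]; rfl
  rw [h2, h, lintegral_smul_measure, hd, abs_of_pos (by positivity), smul_eq_mul, ← mul_assoc,
    ← ENNReal.ofReal_mul (by positivity), mul_inv_cancel₀ (by positivity)]
  simp

lemma inner_eq (s : ℝ) (x : ℂ) (hx : x ≠ 0) :
    ∫⁻ y in ball (0:ℂ) 1, ENNReal.ofReal (‖vC x - vC y‖ ^ 2 / dist x y ^ (3 + s)) =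
    ENNReal.ofReal (‖x‖ ^ (-1 - s)) * ∫⁻ h in {h : ℂ | ‖1 + h‖ < ‖x‖⁻¹}, kC s h := by
  have hp : 0 < ‖x‖ := by simpa using hx
  have := measurable_vC
  rw [← lintegral_indicator measurableSet_ball, lint_mul x hx _
    (Measurable.indicator (by fun_prop) measurableSet_ball), ← lintegral_add_left_eq_self _ (1:ℂ)]
  have hS : MeasurableSet {h : ℂ | ‖1 + h‖ < ‖x‖⁻¹} :=
    measurableSet_lt (by fun_prop) (by fun_prop)
  rw [← lintegral_indicator hS, ← lintegral_const_mul' _ _ ENNReal.ofReal_ne_top,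
    ← lintegral_const_mul' _ _ ENNReal.ofReal_ne_top]
  congr 1
  ext h
  have hiff : x * (1 + h) ∈ ball (0:ℂ) 1 ↔ h ∈ {h : ℂ | ‖1 + h‖ < ‖x‖⁻¹} := by
    simp only [mem_ball_zero_iff, norm_mul, mem_setOf_eq]
    rw [← one_div, lt_div_iff₀ hp, mul_comm]
  simp only [indicator, hiff]
  split_ifs
  · rw [kC, ← ENNReal.ofReal_mul (by positivity), ← ENNReal.ofReal_mul (by positivity)]
    congr 1
    have h1 : vC x - vC (x * (1 + h)) = vC x * (1 - vC (1 + h)) := by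
      rw [vC_mul]; ring
    have h2 : dist x (x * (1 + h)) = ‖x‖ * ‖h‖ := by
      rw [dist_eq_norm, ← norm_mul, ← norm_neg]; congr 1; ring
    rw [h1, h2, norm_mul, norm_vC x hx, one_mul, Real.mul_rpow (by positivity) (by positivity)]
    have h3 : ‖x‖ ^ (-1 - s) = ‖x‖ ^ 2 * (‖x‖ ^ (3 + s))⁻¹ := by
      rw [← Real.rpow_neg hp.le, ← Real.rpow_natCast, ← Real.rpow_add hp]; congr 1; push_cast; ring
    rw [h3]
    field_simp
  · simp

lemma g_bounds (h : ℂ) (hh : ‖h‖ < 1 / 2) :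
    ‖1 - vC (1 + h)‖ ^ 2 ≤ h.im ^ 2 + 6 * ‖h‖ ^ 3 ∧
    h.im ^ 2 ≤ ‖1 - vC (1 + h)‖ ^ 2 + 2 * ‖h‖ ^ 3 := by
  set m := ‖1 + h‖ with hm
  set ρ := ‖h‖ with hρ
  have h0 : 0 ≤ ρ := norm_nonneg _
  have ha := abs_le.1 (Complex.abs_re_le_norm h)
  have hb := Complex.abs_im_le_norm h
  have hm1 : m ≤ 1 + ρ := (norm_add_le _ _).trans (by simp [hρ])
  have hm2 : 1 - ρ ≤ m := by
    have := norm_sub_norm_le (1:ℂ) (-h)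
    simpa [hρ, hm] using this
  have hms : m ^ 2 = (1 + h.re) ^ 2 + h.im ^ 2 := by
    rw [hm, Complex.sq_norm, Complex.normSq_apply]; simp; ring
  have hb2 : h.im ^ 2 ≤ ρ ^ 2 := by
    rw [← sq_abs h.im]; gcongr
  have hmp : 0 < m := by linarith
  have hg : ‖1 - vC (1 + h)‖ ^ 2 = 2 * h.im ^ 2 / (m * (m + 1 + h.re)) := by
    rw [Complex.sq_norm, Complex.normSq_apply]
    simp only [vC, Complex.sub_re, Complex.sub_im, Complex.re_ofReal_mul, Complex.im_ofReal_mul,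
      Complex.add_re, Complex.add_im, Complex.one_re, Complex.one_im, ← hm]
    have : m + 1 + h.re ≠ 0 := by linarith
    have e : h.im ^ 2 = m ^ 2 - (1 + h.re) ^ 2 := by linarith
    field_simp
    ring_nf
    simp only [e]
    ring
  have hd1 : 2 * (1 - ρ) ^ 2 ≤ m * (m + 1 + h.re) := by nlinarith
  have hd2 : m * (m + 1 + h.re) ≤ 2 * (1 + ρ) ^ 2 := by nlinarith
  have hD : 0 < m * (m + 1 + h.re) := by nlinarith
  have hr : 0 ≤ h.im ^ 2 := sq_nonneg _
  rw [hg]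
  constructor
  · have : 2 * h.im ^ 2 / (m * (m + 1 + h.re)) ≤ h.im ^ 2 * (1 + 6 * ρ) := by
      rw [div_le_iff₀ hD]
      have : 2 ≤ (1 + 6 * ρ) * (m * (m + 1 + h.re)) := by
        have : 1 ≤ (1 + 6 * ρ) * (1 - ρ) ^ 2 := by
          nlinarith [mul_nonneg h0 (mul_nonneg (by linarith : 0 ≤ 1 - 2 * ρ) (by linarith : 0 ≤ 4 - 3 * ρ))]
        nlinarith
      nlinarith
    nlinarith
  · have : h.im ^ 2 * (1 - 2 * ρ) ≤ 2 * h.im ^ 2 / (m * (m + 1 + h.re)) := by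
      rw [le_div_iff₀ hD]
      have : (1 - 2 * ρ) * (m * (m + 1 + h.re)) ≤ 2 := by
        have : (1 - 2 * ρ) * (1 + ρ) ^ 2 ≤ 1 := by nlinarith [pow_nonneg h0 3, pow_nonneg h0 2]
        nlinarith
      nlinarith
    nlinarith

lemma kC_upper {s : ℝ} (hs0 : 0 < s) (hs : s < 1) :
    ∫⁻ h, kC s h ≤ ENNReal.ofReal (Real.pi * ((1/2:ℝ) ^ (1 - s) / (1 - s)) +
      6 * (2 * Real.pi * ((1/2:ℝ) ^ (2 - s) / (2 - s))) +
      4 * (2 * Real.pi * (-(1/2:ℝ) ^ (-1 - s) / (-1 - s)))) := by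
  rw [← lintegral_add_compl _ (measurableSet_ball (x := (0:ℂ)) (ε := 1/2))]
  have e1 : ∫⁻ h in ball (0:ℂ) (1/2), kC s h ≤
      ∫⁻ h in ball (0:ℂ) (1/2), (ENNReal.ofReal (h.im ^ 2 * ‖h‖ ^ (-3 - s)) +
        6 * ENNReal.ofReal (‖h‖ ^ (-s))) := by
    refine setLIntegral_mono (by fun_prop) fun h hh => ?_
    rw [mem_ball_zero_iff] at hh
    rw [show (6 : ℝ≥0∞) = ENNReal.ofReal 6 by simp, ← ENNReal.ofReal_mul (by norm_num),
      ← ENNReal.ofReal_add (by positivity) (by positivity), kC]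
    refine ENNReal.ofReal_le_ofReal ?_
    rcases eq_or_ne h 0 with rfl | h0
    · simp [vC, Real.zero_rpow (show 3 + s ≠ 0 by linarith),
        Real.zero_rpow (show -s ≠ 0 by linarith)]
    have hp : 0 < ‖h‖ := by simpa using h0
    rw [show -3 - s = -(3 + s) by ring, show -s = 3 + -(3 + s) by ring, Real.rpow_add hp 3 (-(3 + s)),
      Real.rpow_neg hp.le, div_eq_mul_inv, ← mul_assoc, ← add_mul]
    gcongr
    have := (g_bounds h hh).1
    exact_mod_cast this
  have e2 : ∫⁻ h in (ball (0:ℂ) (1/2))ᶜ, kC s h ≤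
      ∫⁻ h in (ball (0:ℂ) (1/2))ᶜ, 4 * ENNReal.ofReal (‖h‖ ^ (-3 - s)) := by
    refine setLIntegral_mono (by fun_prop) fun h hh => ?_
    rw [show (4 : ℝ≥0∞) = ENNReal.ofReal 4 by simp, ← ENNReal.ofReal_mul (by norm_num), kC]
    refine ENNReal.ofReal_le_ofReal ?_
    rw [show -3 - s = -(3 + s) by ring, Real.rpow_neg (norm_nonneg _), div_eq_mul_inv]
    gcongr
    have h1 : ‖vC (1 + h)‖ ≤ 1 := by
      rcases eq_or_ne (1 + h) 0 with h0 | h0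
      · rw [h0]; simp [vC]
      · exact (norm_vC _ h0).le
    have h2 : ‖1 - vC (1 + h)‖ ≤ 2 := (norm_sub_le _ _).trans (by simp; linarith)
    nlinarith [norm_nonneg (1 - vC (1 + h))]
  refine (add_le_add e1 e2).trans ?_
  rw [lintegral_add_left (by fun_prop), lintegral_const_mul _ (by fun_prop),
    lintegral_const_mul _ (by fun_prop), lint_ball_im (by linarith) (by norm_num),
    lint_ball_rpow (by linarith) (by norm_num), lint_compl_rpow (by linarith) (by norm_num),
    show (6 : ℝ≥0∞) = ENNReal.ofReal 6 by simp, show (4 : ℝ≥0∞) = ENNReal.ofReal 4 by simp,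
    ← ENNReal.ofReal_mul (by norm_num), ← ENNReal.ofReal_mul (by norm_num),
    show -3 - s + 4 = 1 - s by ring, show -s + 2 = 2 - s by ring,
    show -3 - s + 2 = -1 - s by ring]
  have p1 : 0 < 1 - s := by linarith
  have p2 : 0 < 2 - s := by linarith
  have p3 : 0 < 1 + s := by linarith
  have p4 : -(1/2:ℝ) ^ (-1 - s) / (-1 - s) = (1/2:ℝ) ^ (-1 - s) / (1 + s) := by
    rw [show -1 - s = -(1 + s) by ring, neg_div_neg_eq]
  rw [p4, ← ENNReal.ofReal_add (by positivity) (by positivity),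
    ← ENNReal.ofReal_add (by positivity) (by positivity)]

lemma kC_lower {s : ℝ} (hs0 : 0 < s) (hs : s < 1) :
    ENNReal.ofReal (Real.pi * ((1/2:ℝ) ^ (1 - s) / (1 - s)) -
      2 * (2 * Real.pi * ((1/2:ℝ) ^ (2 - s) / (2 - s)))) ≤ ∫⁻ h in ball (0:ℂ) (1/2), kC s h := by
  have p2 : 0 < 2 - s := by linarith
  rw [ENNReal.ofReal_sub _ (by positivity), tsub_le_iff_right,
    show 1 - s = -3 - s + 4 by ring, show 2 - s = -s + 2 by ring,
    ← lint_ball_im (by linarith) (by norm_num), ENNReal.ofReal_mul (by norm_num),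
    ← lint_ball_rpow (by linarith) (by norm_num), ← lintegral_const_mul _ (by fun_prop),
    ← lintegral_add_left (measurable_kC s)]
  have := measurable_kC s
  refine setLIntegral_mono (by fun_prop) fun h hh => ?_
  rw [mem_ball_zero_iff] at hh
  rw [← ENNReal.ofReal_mul (by norm_num), kC,
      ← ENNReal.ofReal_add (by positivity) (by positivity)]
  refine ENNReal.ofReal_le_ofReal ?_
  rcases eq_or_ne h 0 with rfl | h0
  · simp [vC, Real.zero_rpow (show 3 + s ≠ 0 by linarith),
      Real.zero_rpow (show -s ≠ 0 by linarith)]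
  have hp : 0 < ‖h‖ := by simpa using h0
  rw [show -3 - s = -(3 + s) by ring, show -s = 3 + -(3 + s) by ring, Real.rpow_add hp 3 (-(3 + s)),
    Real.rpow_neg hp.le, div_eq_mul_inv, ← mul_assoc, ← add_mul]
  gcongr
  have := (g_bounds h hh).2
  exact_mod_cast this

noncomputable def AC (s : ℝ) : ℝ≥0∞ := ∫⁻ x in ball (0:ℂ) 1, ∫⁻ y in ball (0:ℂ) 1,
  ENNReal.ofReal (‖vC x - vC y‖ ^ 2 / dist x y ^ (3 + s))

lemma AC_upper {s : ℝ} (hs0 : 0 < s) (hs : s < 1) :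
    AC s ≤ ENNReal.ofReal ((2 * Real.pi * (1 / (1 - s))) *
     (Real.pi * ((1/2:ℝ) ^ (1 - s) / (1 - s)) +
      6 * (2 * Real.pi * ((1/2:ℝ) ^ (2 - s) / (2 - s))) +
      4 * (2 * Real.pi * (-(1/2:ℝ) ^ (-1 - s) / (-1 - s))))) := by
  have p1 : 0 < 1 - s := by linarith
  rw [ENNReal.ofReal_mul (by positivity)]
  have h := lint_ball_rpow (a := -1 - s) (R := 1) (by linarith) (by norm_num)
  rw [Real.one_rpow, show -1 - s + 2 = 1 - s by ring] at h
  rw [← h, ← lintegral_mul_const _ (by fun_prop), AC]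
  refine lintegral_mono_ae ?_
  filter_upwards [ae_restrict_of_ae (Measure.ae_ne volume (0:ℂ))] with x hx
  rw [inner_eq s x hx]
  gcongr
  exact (setLIntegral_le_lintegral _ _).trans (kC_upper hs0 hs)

lemma AC_lower {s : ℝ} (hs0 : 0 < s) (hs : s < 1) :
    ENNReal.ofReal ((2 * Real.pi * ((1/2:ℝ) ^ (1 - s) / (1 - s))) *
     (Real.pi * ((1/2:ℝ) ^ (1 - s) / (1 - s)) -
      2 * (2 * Real.pi * ((1/2:ℝ) ^ (2 - s) / (2 - s))))) ≤ AC s := by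
  have p1 : 0 < 1 - s := by linarith
  rw [ENNReal.ofReal_mul (by positivity)]
  have h := lint_ball_rpow (a := -1 - s) (R := 1/2) (by linarith) (by norm_num)
  rw [show -1 - s + 2 = 1 - s by ring] at h
  rw [← h, ← lintegral_mul_const _ (by fun_prop), AC]
  refine le_trans ?_ (lintegral_mono_set (ball_subset_ball (by norm_num : (1/2:ℝ) ≤ 1)))
  refine lintegral_mono_ae ?_
  filter_upwards [ae_restrict_of_ae (Measure.ae_ne volume (0:ℂ)),
    ae_restrict_mem measurableSet_ball] with x hx hxb
  rw [inner_eq s x hx]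
  gcongr
  refine (kC_lower hs0 hs).trans (lintegral_mono_set fun h hh => ?_)
  rw [mem_ball_zero_iff] at hxb hh
  have hp : 0 < ‖x‖ := by simpa using hx
  have : 2 < ‖x‖⁻¹ := by
    rw [lt_inv_comm₀ (by norm_num) hp]; linarith
  have h2 := norm_add_le (1:ℂ) h
  simp only [norm_one] at h2
  simp only [mem_setOf_eq]
  linarith

lemma transfer (s : ℝ) : (∫⁻ x in ball (0 : EuclideanSpace ℝ (Fin 2)) 1,
          ∫⁻ y in ball (0 : EuclideanSpace ℝ (Fin 2)) 1,
            ENNReal.ofReal (‖vortex2 x - vortex2 y‖ ^ 2 / dist x y ^ (3 + s))) = AC s := by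
  let e := Complex.orthonormalBasisOneI.repr
  have he : MeasurePreserving e volume volume := e.measurePreserving
  have hm : MeasurableEmbedding e := e.toHomeomorph.measurableEmbedding
  have hb : e ⁻¹' ball 0 1 = ball 0 1 := by
    ext z; simp
  have hv : ∀ z, vortex2 (e z) = e (vC z) := by
    intro z
    rw [vortex2, vC, e.norm_map, ← map_smul]
    congr 1
  rw [AC, ← he.setLIntegral_comp_preimage_emb hm, hb]
  refine lintegral_congr fun x => ?_
  rw [← he.setLIntegral_comp_preimage_emb hm, hb]
  refine lintegral_congr fun y => ?_
  rw [hv, hv, ← map_sub, e.norm_map, e.dist_map]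

/-- The planar vortex limit. -/
theorem stmt_11 :
    Tendsto (fun s : ℝ => (1 - s) ^ 2 *
        (∫⁻ x in ball (0 : EuclideanSpace ℝ (Fin 2)) 1,
          ∫⁻ y in ball (0 : EuclideanSpace ℝ (Fin 2)) 1,
            ENNReal.ofReal (‖vortex2 x - vortex2 y‖ ^ 2 / dist x y ^ (3 + s))).toReal)
      (nhdsWithin 1 (Iio 1)) (nhds (2 * Real.pi ^ 2)) := by
  simp_rw [transfer]
  have hev : ∀ᶠ s : ℝ in nhdsWithin 1 (Iio 1), 0 < s ∧ s < 1 := by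
    filter_upwards [Ioo_mem_nhdsLT (show (0:ℝ) < 1 by norm_num)] with s hs using hs
  have c0 : ∀ f : ℝ → ℝ, Continuous f → Continuous fun s => (1/2:ℝ) ^ f s := fun f hf =>
    Continuous.rpow continuous_const hf fun _ => Or.inl (by norm_num)
  have c1 := c0 (fun s => 1 - s) (by fun_prop)
  have c2 := c0 (fun s => 2 - s) (by fun_prop)
  have c3 := c0 (fun s => -1 - s) (by fun_prop)
  have tU : Tendsto (fun s : ℝ => 2 * Real.pi * (Real.pi * (1/2:ℝ) ^ (1 - s) +
      (1 - s) * (6 * (2 * Real.pi * ((1/2:ℝ) ^ (2 - s) / (2 - s))) +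
      4 * (2 * Real.pi * (-(1/2:ℝ) ^ (-1 - s) / (-1 - s))))))
      (nhdsWithin 1 (Iio 1)) (nhds (2 * Real.pi ^ 2)) := by
    refine tendsto_nhdsWithin_of_tendsto_nhds ?_
    have : ContinuousAt (fun s : ℝ => 2 * Real.pi * (Real.pi * (1/2:ℝ) ^ (1 - s) +
      (1 - s) * (6 * (2 * Real.pi * ((1/2:ℝ) ^ (2 - s) / (2 - s))) +
      4 * (2 * Real.pi * (-(1/2:ℝ) ^ (-1 - s) / (-1 - s)))))) 1 := by
      have d2 : ContinuousAt (fun s : ℝ => (1/2:ℝ) ^ (2 - s) / (2 - s)) 1 :=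
        c2.continuousAt.div (by fun_prop) (by norm_num)
      have d3 : ContinuousAt (fun s : ℝ => -(1/2:ℝ) ^ (-1 - s) / (-1 - s)) 1 :=
        c3.continuousAt.neg.div (by fun_prop) (by norm_num)
      have d1 := c1.continuousAt (x := 1)
      fun_prop
    have h := this.tendsto
    simp only [sub_self, Real.rpow_zero, zero_mul, add_zero, mul_one] at h
    convert! h using 2
    ring
  have tL : Tendsto (fun s : ℝ => 2 * Real.pi * (1/2:ℝ) ^ (1 - s) *
      (Real.pi * (1/2:ℝ) ^ (1 - s) -
      (1 - s) * (2 * (2 * Real.pi * ((1/2:ℝ) ^ (2 - s) / (2 - s))))))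
      (nhdsWithin 1 (Iio 1)) (nhds (2 * Real.pi ^ 2)) := by
    refine tendsto_nhdsWithin_of_tendsto_nhds ?_
    have : ContinuousAt (fun s : ℝ => 2 * Real.pi * (1/2:ℝ) ^ (1 - s) *
      (Real.pi * (1/2:ℝ) ^ (1 - s) -
      (1 - s) * (2 * (2 * Real.pi * ((1/2:ℝ) ^ (2 - s) / (2 - s)))))) 1 := by
      have d2 : ContinuousAt (fun s : ℝ => (1/2:ℝ) ^ (2 - s) / (2 - s)) 1 :=
        c2.continuousAt.div (by fun_prop) (by norm_num)
      have d1 := c1.continuousAt (x := 1)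
      fun_prop
    have h := this.tendsto
    simp only [sub_self, Real.rpow_zero, zero_mul, sub_zero, mul_one] at h
    convert! h using 2
    ring
  refine tendsto_of_tendsto_of_tendsto_of_le_of_le' tL tU ?_ ?_
  · filter_upwards [hev] with s hs
    have p1 : 1 - s ≠ 0 := by linarith [hs.2]
    have h := AC_lower hs.1 hs.2
    have hfin : AC s ≠ ⊤ := ne_top_of_le_ne_top ENNReal.ofReal_ne_top (AC_upper hs.1 hs.2)
    have h' := (ENNReal.ofReal_le_iff_le_toReal hfin).1 h
    refine le_trans (le_of_eq ?_) (mul_le_mul_of_nonneg_left h' (sq_nonneg (1 - s)))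
    generalize (1/2:ℝ) ^ (2 - s) / (2 - s) = Q
    field_simp
  · filter_upwards [hev] with s hs
    have p1 : 1 - s ≠ 0 := by linarith [hs.2]
    have p0 : 0 < 1 - s := by linarith [hs.2]
    have p2 : 0 < 2 - s := by linarith [hs.2]
    have p3 : 0 < 1 + s := by linarith [hs.1]
    have h := AC_upper hs.1 hs.2
    have p4 : 0 ≤ -(1/2:ℝ) ^ (-1 - s) / (-1 - s) := by
      rw [show -1 - s = -(1 + s) by ring, neg_div_neg_eq]; positivity
    have h' := ENNReal.toReal_le_of_le_ofReal (by positivity) h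
    refine le_trans (mul_le_mul_of_nonneg_left h' (sq_nonneg (1 - s))) (le_of_eq ?_)
    generalize (1/2:ℝ) ^ (2 - s) / (2 - s) = Q
    generalize -(1/2:ℝ) ^ (-1 - s) / (-1 - s) = Q'
    field_simp
    try ring
end
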